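/- arXiv:1311.3781 — 4 statements merged into one kernel-verified Lean document; each statement's English description precedes it below -/
import Mathlib

section
/- Let φ be a subharmonic function on the unit disc Δ ⊂ ℂ with φ(z) < 0 for every z ∈ Δ, and let F be a holomorphic function on Δ satisfying ∫_{Δ} |F|² e^{−φ} dλ₁ < +∞. Then there exist r ∈ (0,1) and p > 1 such that ∫_{Δ_r} |F|² e^{−pφ} dλ₁ < +∞. -/
open MeasureTheory Set Filter ENNReal Complex

/-- `φ : Δ → [−∞, +∞)` is subharmonic on `D ⊆ ℂ`: it is upper semicontinuous,
nowhere `+∞`, not identically `−∞` on any connected component, and satisfies the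
sub-mean value inequality `φ(z₀) ≤ (1/2π) ∫₀^{2π} φ(z₀ + ρ e^{iθ}) dθ` whenever
the closed disc of radius `ρ` about `z₀` lies in `D`.  (For the extended-real
valued `φ`, the circle mean is encoded through its truncations `φ ⊔ M`, `M ∈ ℝ`,
which are real-valued and decrease to `φ`; this is equivalent to the usual
inequality since `φ` is bounded above on the compact circle.) -/
def SubharmonicOn (φ : ℂ → EReal) (D : Set ℂ) : Prop :=
  UpperSemicontinuousOn φ D ∧
  (∀ z ∈ D, φ z ≠ ⊤) ∧
  (∀ z ∈ D, ∃ y ∈ connectedComponentIn D z, φ y ≠ ⊥) ∧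
  ∀ z₀ ∈ D, ∀ ρ : ℝ, 0 < ρ → (∀ t : ℂ, ‖t‖ ≤ ρ → z₀ + t ∈ D) →
    ∀ M : ℝ, φ z₀ ≤
      (((2 * Real.pi)⁻¹ * ∫ θ in (0 : ℝ)..(2 * Real.pi),
        (φ (z₀ + (ρ : ℂ) * Complex.exp (θ * Complex.I)) ⊔ (M : EReal)).toReal : ℝ) : EReal)

/-!
Near a point where `F` vanishes to order `k`, `|F|²` is comparable to `|z|^{2k}`, so only these
weights matter. Truncate `φ` to a bounded function `v` and regularise with the kernel
`log⁺ (h / |w|)`. By Jensen's formula the circle means of the regularisation grow at the rate of its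
Laplacian mass, hence a mass `2k + 2` near the origin would force `∫ |z|^{2k} e^{-v}` to diverge
like `∫ |z|⁻²`. The masses in a fixed small disc therefore stay below `2k + 2`, uniformly in the
truncation and in `h`.

Now choose a disc in which almost all of this mass sits, asymptotically, at the origin. There `-v`
is bounded by a constant plus the logarithmic potential of the mass. The part at the origin
contributes a factor `|z|^{-ν}` with `ν < 2k + 2`; the rest has small mass, so Jensen's inequality
for `exp` controls the exponential of its potential. The strict inequality leaves room for an
exponent `p > 1`, and the bound passes to `φ` by Fatou's lemma.
-/

open scoped Convolution Topology

namespace StrongOpenness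

section CircleAverage

instance : IsFiniteMeasure (volume.restrict (Set.uIoc (0 : ℝ) (2 * Real.pi))) := by
  unfold Set.uIoc; infer_instance

lemma norm_circleMap_le (z : ℂ) (r θ : ℝ) : ‖circleMap z r θ‖ ≤ ‖z‖ + |r| := by
  simpa [circleMap] using norm_add_le z (circleMap 0 r θ)

lemma norm_sub_abs_le_norm_circleMap (z : ℂ) (r θ : ℝ) : ‖z‖ - |r| ≤ ‖circleMap z r θ‖ := by
  simpa [circleMap] using norm_sub_norm_le z (-circleMap 0 r θ)

lemma circleMap_sub_right (z w : ℂ) (r θ : ℝ) :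
    circleMap z r θ - w = circleMap (z - w) r θ := by
  simp only [circleMap]; ring

lemma circleMap_circleMap_comm (z : ℂ) (r s θ τ : ℝ) :
    circleMap (circleMap z r θ) s τ = circleMap (circleMap z s τ) r θ := by
  simp only [circleMap]; ring

lemma abs_circleAverage_le {f : ℂ → ℝ} {z : ℂ} {r C : ℝ}
    (hC : ∀ θ, |f (circleMap z r θ)| ≤ C) : |Real.circleAverage f z r| ≤ C := by
  have hI := intervalIntegral.norm_integral_le_of_norm_le_const (a := 0) (b := 2 * Real.pi)
    (f := fun θ => f (circleMap z r θ)) fun θ _ => hC θ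
  rw [Real.norm_eq_abs, sub_zero, abs_of_pos Real.two_pi_pos] at hI
  rw [Real.circleAverage_def, smul_eq_mul, abs_mul, abs_of_pos (inv_pos.2 Real.two_pi_pos),
    inv_mul_le_iff₀ Real.two_pi_pos]
  linarith

lemma measurable_circleAverage {f : ℂ → ℝ} (hf : Measurable f) :
    Measurable fun p : ℂ × ℝ => Real.circleAverage f p.1 p.2 := by
  simp only [Real.circleAverage_def, smul_eq_mul,
    intervalIntegral.integral_of_le Real.two_pi_pos.le]
  have hjoint : StronglyMeasurable fun q : (ℂ × ℝ) × ℝ => f (circleMap q.1.1 q.1.2 q.2) := by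
    refine (hf.comp (Continuous.measurable ?_)).stronglyMeasurable
    unfold circleMap
    fun_prop
  exact hjoint.integral_prod_right'.measurable.const_mul _

lemma circleAverage_const_mul (c : ℝ) (f : ℂ → ℝ) (z : ℂ) (r : ℝ) :
    Real.circleAverage (fun w => c * f w) z r = c * Real.circleAverage f z r :=
  Real.circleAverage_fun_smul (a := c) (f := f)

/-- Measurable functions that are bounded on bounded sets. -/
structure LocallyBoundedMeasurable (f : ℂ → ℝ) : Prop where
  measurable : Measurable f
  bounded : ∀ T, ∃ C, ∀ z, ‖z‖ ≤ T → |f z| ≤ C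

namespace LocallyBoundedMeasurable

variable {f : ℂ → ℝ}

lemma circleIntegrable (hf : LocallyBoundedMeasurable f) (z : ℂ) (r : ℝ) :
    CircleIntegrable f z r := by
  obtain ⟨C, hC⟩ := hf.bounded (‖z‖ + |r|)
  exact (intervalIntegrable_const (c := C)).mono_fun'
    (hf.measurable.comp (continuous_circleMap z r).measurable).aestronglyMeasurable
    (.of_forall fun θ => hC _ (norm_circleMap_le z r θ))

lemma circleAverage (hf : LocallyBoundedMeasurable f) (r : ℝ) :
    LocallyBoundedMeasurable fun z => Real.circleAverage f z r := by
  refine ⟨(measurable_circleAverage hf.measurable).comp measurable_prodMk_right, fun T => ?_⟩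
  obtain ⟨C, hC⟩ := hf.bounded (T + |r|)
  refine ⟨C, fun z hz => abs_circleAverage_le fun θ => hC _ ?_⟩
  linarith [norm_circleMap_le z r θ]

lemma const_mul (hf : LocallyBoundedMeasurable f) (c : ℝ) :
    LocallyBoundedMeasurable fun z => c * f z := by
  refine ⟨hf.measurable.const_mul c, fun T => ?_⟩
  obtain ⟨C, hC⟩ := hf.bounded T
  refine ⟨|c| * C, fun z hz => ?_⟩
  rw [abs_mul]
  exact mul_le_mul_of_nonneg_left (hC z hz) (abs_nonneg c)

lemma exp_neg (hf : LocallyBoundedMeasurable f) :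
    LocallyBoundedMeasurable fun z => Real.exp (-f z) := by
  refine ⟨hf.measurable.neg.exp, fun T => ?_⟩
  obtain ⟨C, hC⟩ := hf.bounded T
  refine ⟨Real.exp C, fun z hz => ?_⟩
  rw [abs_of_pos (Real.exp_pos _), Real.exp_le_exp]
  linarith [neg_abs_le (f z), hC z hz]

lemma integrableOn_ball (hf : LocallyBoundedMeasurable f) (z : ℂ) (r : ℝ) :
    IntegrableOn f (Metric.ball z r) := by
  obtain ⟨C, hC⟩ := hf.bounded (‖z‖ + r)
  refine Measure.integrableOn_of_bounded (M := C) measure_ball_lt_top.ne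
    hf.measurable.aestronglyMeasurable ?_
  filter_upwards [ae_restrict_mem measurableSet_ball] with w hw
  refine hC w ?_
  have := norm_sub_norm_le w z
  linarith [mem_ball_iff_norm.1 hw]

lemma circleAverage_comm (hf : LocallyBoundedMeasurable f) (r s : ℝ) (z : ℂ) :
    Real.circleAverage (fun y => Real.circleAverage f y r) z s =
      Real.circleAverage (fun y => Real.circleAverage f y s) z r := by
  obtain ⟨C, hC⟩ := hf.bounded (‖z‖ + |s| + |r|)
  simp only [Real.circleAverage_def, smul_eq_mul,
    intervalIntegral.integral_of_le Real.two_pi_pos.le, integral_const_mul]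
  rw [integral_integral_swap]
  · simp only [circleMap_circleMap_comm z s r]
  · refine (integrable_const C).mono' (hf.measurable.comp (Continuous.measurable ?_)
      ).aestronglyMeasurable (.of_forall fun p => hC _ ?_)
    · unfold circleMap
      fun_prop
    · linarith [norm_circleMap_le (circleMap z s p.1) r p.2, norm_circleMap_le z s p.1]

lemma exp_neg_circleAverage_le (hf : LocallyBoundedMeasurable f) (z : ℂ) (r : ℝ) :
    Real.exp (-Real.circleAverage f z r) ≤
      Real.circleAverage (fun w => Real.exp (-f w)) z r := by
  simp only [Real.circleAverage_eq_intervalAverage]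
  have : NeZero (volume.restrict (Set.uIoc 0 (2 * Real.pi))) := by
    rw [neZero_iff, Ne, Measure.restrict_eq_zero, Set.uIoc_of_le Real.two_pi_pos.le]
    simp [Real.pi_pos]
  have hconvex : ConvexOn ℝ Set.univ fun x : ℝ => Real.exp (-x) := by
    simpa [Function.comp_def] using convexOn_exp.comp_linearMap (-(LinearMap.id : ℝ →ₗ[ℝ] ℝ))
  exact hconvex.map_average_le (by fun_prop) isClosed_univ (by simp)
    (hf.circleIntegrable z r).def' (hf.exp_neg.circleIntegrable z r).def'

end LocallyBoundedMeasurable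

end CircleAverage

section Radial

lemma circleAverage_exp_mul_eq (f : ℂ → ℝ) (w : ℂ) :
    (2 * Real.pi)⁻¹ * ∫ θ in (0 : ℝ)..2 * Real.pi, f (Complex.exp (θ * Complex.I) * w) =
      Real.circleAverage f 0 ‖w‖ := by
  have hrotate (θ : ℝ) :
      circleMap 0 ‖w‖ (θ + w.arg) = Complex.exp (θ * Complex.I) * w := by
    conv_rhs => rw [← Complex.norm_mul_exp_arg_mul_I w]
    simp only [circleMap, Complex.ofReal_add, add_mul, Complex.exp_add]
    ring
  simp only [Real.circleAverage_eq_integral_add w.arg, hrotate, smul_eq_mul]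

variable {T : Set ℝ} {f : ℂ → ℝ}

lemma measurePreserving_exp_mul (hT : MeasurableSet T) (θ : ℝ) :
    MeasurePreserving (fun w : ℂ => Complex.exp (θ * Complex.I) * w)
      (volume.restrict (norm ⁻¹' T)) (volume.restrict (norm ⁻¹' T)) := by
  have hvolume : MeasurePreserving (fun w : ℂ => Complex.exp (θ * Complex.I) * w) := by
    rw [← Circle.coe_exp]
    exact (rotation (Circle.exp θ)).measurePreserving
  have hpreimage : (fun w : ℂ => Complex.exp (θ * Complex.I) * w) ⁻¹' (norm ⁻¹' T) =
      norm ⁻¹' T := by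
    simp [← Set.preimage_comp, Function.comp_def, Complex.norm_exp_ofReal_mul_I]
  simpa only [hpreimage] using hvolume.restrict_preimage (measurable_norm hT)

lemma integrable_exp_mul_prod (hT : MeasurableSet T)
    (hf : IntegrableOn f (norm ⁻¹' T : Set ℂ)) :
    Integrable (fun p : ℝ × ℂ => f (Complex.exp (p.1 * Complex.I) * p.2))
      ((volume.restrict (Set.uIoc 0 (2 * Real.pi))).prod
        (volume.restrict (norm ⁻¹' T : Set ℂ))) := by
  have hskew := (MeasurePreserving.id (volume.restrict (Set.uIoc 0 (2 * Real.pi)))).skew_product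
    (g := fun (θ : ℝ) (w : ℂ) => Complex.exp (θ * Complex.I) * w)
    (Continuous.measurable (by fun_prop))
    (.of_forall fun θ => (measurePreserving_exp_mul hT θ).map_eq)
  exact hskew.integrable_comp_of_integrable (hf.comp_snd _)

lemma setIntegral_circleAverage_norm (hT : MeasurableSet T)
    (hf : IntegrableOn f (norm ⁻¹' T : Set ℂ)) :
    ∫ w in (norm ⁻¹' T : Set ℂ), Real.circleAverage f 0 ‖w‖ =
      ∫ w in (norm ⁻¹' T : Set ℂ), f w := by
  have hrotation (θ : ℝ) : ∫ w in (norm ⁻¹' T : Set ℂ), f (Complex.exp (θ * Complex.I) * w) =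
      ∫ w in (norm ⁻¹' T : Set ℂ), f w :=
    (measurePreserving_exp_mul hT θ).integral_comp
      (measurableEmbedding_mulLeft₀ (Complex.exp_ne_zero _)) f
  simp only [← circleAverage_exp_mul_eq f, integral_const_mul]
  rw [← intervalIntegral_integral_swap (integrable_exp_mul_prod hT hf)]
  simp only [hrotation, intervalIntegral.integral_const, sub_zero, smul_eq_mul]
  exact inv_mul_cancel_left₀ Real.two_pi_pos.ne' _

lemma integrableOn_circleAverage_norm (hT : MeasurableSet T)
    (hf : IntegrableOn f (norm ⁻¹' T : Set ℂ)) :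
    IntegrableOn (fun w : ℂ => Real.circleAverage f 0 ‖w‖) (norm ⁻¹' T : Set ℂ) := by
  simp only [← circleAverage_exp_mul_eq f,
    intervalIntegral.integral_of_le Real.two_pi_pos.le,
    ← Set.uIoc_of_le Real.two_pi_pos.le]
  exact (integrable_exp_mul_prod hT hf).integral_prod_right.const_mul _

lemma setIntegral_comp_norm_le_of_le_circleAverage {g : ℝ → ℝ} (hT : MeasurableSet T)
    (hg : IntegrableOn (fun w : ℂ => g ‖w‖) (norm ⁻¹' T : Set ℂ))
    (hf : IntegrableOn f (norm ⁻¹' T : Set ℂ))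
    (h : ∀ r ∈ T, 0 < r → g r ≤ Real.circleAverage f 0 r) :
    ∫ w in (norm ⁻¹' T : Set ℂ), g ‖w‖ ≤ ∫ w in (norm ⁻¹' T : Set ℂ), f w := by
  rw [← setIntegral_circleAverage_norm hT hf]
  refine integral_mono_ae hg (integrableOn_circleAverage_norm hT hf) ?_
  filter_upwards [ae_restrict_mem (measurable_norm hT),
    ae_restrict_of_ae (Measure.ae_ne volume 0)] with w hw hw0
  exact h _ hw (norm_pos_iff.2 hw0)

lemma circleAverage_norm_mul (k : ℝ → ℝ) (f : ℂ → ℝ) {r : ℝ} (hr : 0 ≤ r) :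
    Real.circleAverage (fun w => k ‖w‖ * f w) 0 r = k r * Real.circleAverage f 0 r := by
  rw [← circleAverage_const_mul]
  refine Real.circleAverage_congr_sphere fun w hw => ?_
  simp only [mem_sphere_zero_iff_norm.1 hw, abs_of_nonneg hr]

lemma setIntegral_ball_le_of_circleAverage_le {f : ℂ → ℝ} {z : ℂ} {R c : ℝ}
    (hf : IntegrableOn f (Metric.ball z R))
    (h : ∀ r, 0 < r → r < R → Real.circleAverage f z r ≤ c) :
    ∫ w in Metric.ball z R, f w ≤ volume.real (Metric.ball z R) * c := by
  have htranslate := measurePreserving_add_right (volume : Measure ℂ) z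
  have hembedding := measurableEmbedding_addRight z
  have hball : (fun w => w + z) ⁻¹' Metric.ball z R = (norm ⁻¹' Set.Iio R : Set ℂ) := by
    ext w
    simp
  have hvolume : volume.real (norm ⁻¹' Set.Iio R : Set ℂ) = volume.real (Metric.ball z R) := by
    simp only [measureReal_def, ← hball, htranslate.measure_preimage_emb hembedding]
  have hf' : IntegrableOn (fun w => f (w + z)) (norm ⁻¹' Set.Iio R : Set ℂ) := by
    rw [← hball]
    exact (htranslate.integrableOn_comp_preimage hembedding).2 hf
  have hmean := setIntegral_comp_norm_le_of_le_circleAverage (g := fun _ => -c)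
    (f := fun w => -f (w + z)) measurableSet_Iio
    (integrableOn_const (by rw [← hball, htranslate.measure_preimage_emb hembedding]; exact
      measure_ball_lt_top.ne)) hf'.neg fun r hrR hr => ?_
  · rw [integral_neg, integral_neg, setIntegral_const, hvolume, ← hball,
      htranslate.setIntegral_preimage_emb hembedding f, smul_eq_mul] at hmean
    linarith
  · simp only [← neg_one_mul (f _), circleAverage_const_mul, Real.circleAverage_map_add_const]
    linarith [h r hr hrR]

end Radial

section Convolution

/-- Bounded measurable functions of bounded support: the densities that can be convolved, at every
point, with an arbitrary locally integrable kernel. -/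
structure BoundedSupportMeasurable (v : ℂ → ℝ) : Prop where
  measurable : Measurable v
  bounded : ∃ B, ∀ z, |v z| ≤ B
  eq_zero_of_lt_norm : ∃ T, ∀ z, T < ‖z‖ → v z = 0

namespace BoundedSupportMeasurable

variable {v w : ℂ → ℝ}

lemma locallyBoundedMeasurable (hv : BoundedSupportMeasurable v) : LocallyBoundedMeasurable v :=
  ⟨hv.measurable, fun _ => hv.bounded.imp fun _ hB z _ => hB z⟩

lemma circleAverage (hv : BoundedSupportMeasurable v) (r : ℝ) :
    BoundedSupportMeasurable fun z => Real.circleAverage v z r := by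
  obtain ⟨B, hB⟩ := hv.bounded
  obtain ⟨T, hT⟩ := hv.eq_zero_of_lt_norm
  refine ⟨(hv.locallyBoundedMeasurable.circleAverage r).measurable,
    ⟨B, fun z => abs_circleAverage_le fun θ => hB _⟩, T + |r|, fun z hz => ?_⟩
  refine abs_nonpos_iff.1 (abs_circleAverage_le fun θ => ?_)
  rw [hT, abs_zero]
  linarith [norm_sub_abs_le_norm_circleMap z r θ]

lemma sub (hv : BoundedSupportMeasurable v) (hw : BoundedSupportMeasurable w) :
    BoundedSupportMeasurable fun z => v z - w z := by
  obtain ⟨B, hB⟩ := hv.bounded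
  obtain ⟨T, hT⟩ := hv.eq_zero_of_lt_norm
  obtain ⟨B', hB'⟩ := hw.bounded
  obtain ⟨T', hT'⟩ := hw.eq_zero_of_lt_norm
  refine ⟨hv.measurable.sub hw.measurable,
    ⟨B + B', fun z => (abs_sub _ _).trans (add_le_add (hB z) (hB' z))⟩, max T T', fun z hz => ?_⟩
  rw [hT z ((le_max_left _ _).trans_lt hz), hT' z ((le_max_right _ _).trans_lt hz), sub_zero]

lemma const_mul (hv : BoundedSupportMeasurable v) (c : ℝ) :
    BoundedSupportMeasurable fun z => c * v z := by
  obtain ⟨B, hB⟩ := hv.bounded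
  obtain ⟨T, hT⟩ := hv.eq_zero_of_lt_norm
  refine ⟨hv.measurable.const_mul c, ⟨|c| * B, fun z => ?_⟩, T,
    fun z hz => by rw [hT z hz, mul_zero]⟩
  rw [abs_mul]
  exact mul_le_mul_of_nonneg_left (hB z) (abs_nonneg c)

lemma exists_integrable_bound {k : ℂ → ℝ} (hk : LocallyIntegrable k)
    (hv : BoundedSupportMeasurable v) (T : ℝ) :
    ∃ g : ℂ → ℝ, Integrable g ∧ ∀ z w, ‖z‖ ≤ T → |k w * v (z - w)| ≤ g w := by
  obtain ⟨B, hB⟩ := hv.bounded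
  obtain ⟨S, hS⟩ := hv.eq_zero_of_lt_norm
  refine ⟨(Metric.closedBall 0 (T + S)).indicator fun w => |k w| * B,
    (integrable_indicator_iff measurableSet_closedBall).2
      ((hk.integrableOn_isCompact (isCompact_closedBall _ _)).abs.mul_const B), fun z w hz => ?_⟩
  by_cases hw : w ∈ Metric.closedBall (0 : ℂ) (T + S)
  · rw [indicator_of_mem hw, abs_mul]
    exact mul_le_mul_of_nonneg_left (hB _) (abs_nonneg _)
  · have hzw : S < ‖z - w‖ := by
      rw [mem_closedBall_zero_iff, not_le] at hw
      rw [norm_sub_rev]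
      linarith [norm_sub_norm_le w z]
    rw [indicator_of_notMem hw, hS _ hzw, mul_zero, abs_zero]

lemma integrable (hv : BoundedSupportMeasurable v) : Integrable v := by
  obtain ⟨g, hg, hbound⟩ :=
    hv.exists_integrable_bound (k := fun _ => 1) (locallyIntegrable_const _) 0
  refine ((hg.mono' ?_ (.of_forall fun w => hbound 0 w norm_zero.le)).comp_neg).congr
    (.of_forall fun w => by simp)
  exact (measurable_const.mul (hv.measurable.comp (measurable_id.const_sub 0))).aestronglyMeasurable

end BoundedSupportMeasurable

variable {k v w : ℂ → ℝ}

lemma integrable_mul_comp_sub (hkm : Measurable k) (hk : LocallyIntegrable k)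
    (hv : BoundedSupportMeasurable v) (z : ℂ) : Integrable fun w => k w * v (z - w) := by
  obtain ⟨g, hg, hbound⟩ := hv.exists_integrable_bound hk ‖z‖
  exact hg.mono' (hkm.mul (hv.measurable.comp (measurable_id.const_sub z))).aestronglyMeasurable
    (.of_forall fun w => hbound z w le_rfl)

lemma integrable_comp_sub_mul (hkm : Measurable k) (hk : LocallyIntegrable k)
    (hv : BoundedSupportMeasurable v) (z : ℂ) : Integrable fun w => k (z - w) * v w := by
  simpa using (integrable_mul_comp_sub hkm hk hv z).comp_sub_left z

lemma locallyBoundedMeasurable_convolution (hkm : Measurable k) (hk : LocallyIntegrable k)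
    (hv : BoundedSupportMeasurable v) : LocallyBoundedMeasurable (k ⋆ v) := by
  refine ⟨StronglyMeasurable.measurable (StronglyMeasurable.integral_prod_right ?_), fun T => ?_⟩
  · exact ((hkm.comp measurable_snd).mul
      (hv.measurable.comp (measurable_fst.sub measurable_snd))).stronglyMeasurable
  · obtain ⟨g, hg, hbound⟩ := hv.exists_integrable_bound hk T
    refine ⟨∫ w, g w, fun z hz => ?_⟩
    rw [convolution_lsmul, ← Real.norm_eq_abs]
    exact norm_integral_le_of_norm_le hg (.of_forall fun w => hbound z w hz)

lemma convolution_sub (hkm : Measurable k) (hk : LocallyIntegrable k)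
    (hv : BoundedSupportMeasurable v) (hw : BoundedSupportMeasurable w) (z : ℂ) :
    (k ⋆ fun y => v y - w y) z = (k ⋆ v) z - (k ⋆ w) z := by
  simp only [convolution_lsmul, smul_eq_mul, mul_sub]
  exact integral_sub (integrable_mul_comp_sub hkm hk hv z) (integrable_mul_comp_sub hkm hk hw z)

lemma integrable_mul_circleMap_sub (hkm : Measurable k) (hk : LocallyIntegrable k)
    (hv : BoundedSupportMeasurable v) (z : ℂ) (r : ℝ) :
    Integrable (fun p : ℝ × ℂ => k p.2 * v (circleMap z r p.1 - p.2))
      ((volume.restrict (Set.uIoc 0 (2 * Real.pi))).prod volume) := by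
  obtain ⟨g, hg, hbound⟩ := hv.exists_integrable_bound hk (‖z‖ + |r|)
  refine (hg.comp_snd _).mono' ?_ (.of_forall fun p => hbound _ _ (norm_circleMap_le z r _))
  exact ((hkm.comp measurable_snd).mul (hv.measurable.comp
    (((continuous_circleMap z r).measurable.comp measurable_fst).sub
      measurable_snd))).aestronglyMeasurable

lemma circleAverage_convolution_right (hkm : Measurable k) (hk : LocallyIntegrable k)
    (hv : BoundedSupportMeasurable v) (z : ℂ) (r : ℝ) :
    Real.circleAverage (k ⋆ v) z r = (k ⋆ fun y => Real.circleAverage v y r) z := by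
  simp only [Real.circleAverage_def, convolution_lsmul, smul_eq_mul]
  rw [intervalIntegral_integral_swap (integrable_mul_circleMap_sub hkm hk hv z r),
    ← integral_const_mul]
  refine integral_congr_ae (.of_forall fun w => ?_)
  simp only [intervalIntegral.integral_const_mul, circleMap_sub_right]
  ring

lemma circleAverage_convolution_left (hkm : Measurable k) (hk : LocallyIntegrable k)
    (hv : BoundedSupportMeasurable v) (z : ℂ) (r : ℝ) :
    Real.circleAverage (k ⋆ v) z r = ((fun y => Real.circleAverage k y r) ⋆ v) z := by
  have hreflect : MeasurePreserving (fun p : ℝ × ℂ => (p.1, circleMap z r p.1 - p.2))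
      ((volume.restrict (Set.uIoc 0 (2 * Real.pi))).prod volume)
      ((volume.restrict (Set.uIoc 0 (2 * Real.pi))).prod volume) :=
    (MeasurePreserving.id _).skew_product (g := fun θ w => circleMap z r θ - w)
      (((continuous_circleMap z r).measurable.comp measurable_fst).sub measurable_snd)
      (.of_forall fun θ => (Measure.measurePreserving_sub_left volume (circleMap z r θ)).map_eq)
  have hint : Integrable (fun p : ℝ × ℂ => k (circleMap z r p.1 - p.2) * v p.2)
      ((volume.restrict (Set.uIoc 0 (2 * Real.pi))).prod volume) := by
    simpa [Function.comp_def] using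
      hreflect.integrable_comp_of_integrable (integrable_mul_circleMap_sub hkm hk hv z r)
  simp only [Real.circleAverage_def, convolution_lsmul_swap, smul_eq_mul]
  rw [intervalIntegral_integral_swap hint, ← integral_const_mul]
  refine integral_congr_ae (.of_forall fun w => ?_)
  simp only [intervalIntegral.integral_mul_const, circleMap_sub_right]
  ring

end Convolution

section LogKernel

/-- The Green function `log (h / |w|)` of the disc of radius `h` with pole at its centre, extended
by zero outside the disc. At the pole itself it takes the value `0`. -/
noncomputable def logKernel (h : ℝ) (w : ℂ) : ℝ := Real.posLog (h / ‖w‖)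

variable {h R : ℝ} {w : ℂ}

lemma logKernel_nonneg (h : ℝ) (w : ℂ) : 0 ≤ logKernel h w := Real.posLog_nonneg

lemma logKernel_neg (h : ℝ) (w : ℂ) : logKernel h (-w) = logKernel h w := by
  simp [logKernel]

lemma logKernel_eq_zero (hh : 0 ≤ h) (hw : h ≤ ‖w‖) : logKernel h w = 0 := by
  rw [logKernel, Real.posLog_eq_zero_iff, abs_of_nonneg (by positivity)]
  exact div_le_one_of_le₀ hw (norm_nonneg w)

lemma logKernel_eq_log_sub_log (hw0 : w ≠ 0) (hw : ‖w‖ ≤ h) :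
    logKernel h w = Real.log h - Real.log ‖w‖ := by
  have hpos := norm_pos_iff.2 hw0
  rw [logKernel, Real.posLog_eq_log, Real.log_div (hpos.trans_le hw).ne' hpos.ne']
  exact ((one_le_div hpos).2 hw).trans (le_abs_self _)

lemma logKernel_mono (hh : 0 ≤ h) (hR : h ≤ R) (w : ℂ) : logKernel h w ≤ logKernel R w :=
  Real.posLog_le_posLog (by positivity) (by gcongr)

lemma logKernel_le_div_norm (hh : 0 ≤ h) (w : ℂ) : logKernel h w ≤ h / ‖w‖ :=
  max_le (by positivity) (Real.log_le_self (by positivity))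

lemma measurable_logKernel (h : ℝ) : Measurable (logKernel h) :=
  Real.continuous_posLog.measurable.comp (measurable_norm.const_div h)

lemma locallyIntegrable_logKernel (hh : 0 ≤ h) : LocallyIntegrable (logKernel h) := by
  refine locallyIntegrable_of_norm_le_rpow (C := h) (α := 1) (by simp) (by simp) ?_
    (measurable_logKernel h).aestronglyMeasurable
  refine .of_forall fun w => ?_
  rw [Real.norm_of_nonneg (logKernel_nonneg h w), Real.rpow_neg_one, ← div_eq_mul_inv]
  exact logKernel_le_div_norm hh w

lemma integrable_logKernel (hh : 0 ≤ h) : Integrable (logKernel h) := by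
  refine ((locallyIntegrable_logKernel hh).integrableOn_isCompact
    (isCompact_closedBall 0 h)).integrable_of_forall_notMem_eq_zero fun w hw => ?_
  exact logKernel_eq_zero hh (not_le.1 (mt mem_closedBall_zero_iff.2 hw)).le

lemma integral_logKernel_pos (hh : 0 < h) : 0 < ∫ w, logKernel h w := by
  rw [integral_pos_iff_support_of_nonneg (logKernel_nonneg h) (integrable_logKernel hh.le)]
  have hsupport : Metric.ball 0 h \ {0} ⊆ Function.support (logKernel h) := fun w hw => by
    have hw0 : w ≠ 0 := hw.2
    have hwh : ‖w‖ < h := mem_ball_zero_iff.1 hw.1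
    rw [Function.mem_support, logKernel_eq_log_sub_log hw0 hwh.le]
    exact (sub_pos.2 (Real.log_lt_log (norm_pos_iff.2 hw0) hwh)).ne'
  refine (Metric.measure_ball_pos volume (0 : ℂ) hh).trans_le ?_
  rw [← measure_sdiff_null (measure_singleton (0 : ℂ))]
  exact measure_mono hsupport

lemma locallyIntegrable_log_norm : LocallyIntegrable fun w : ℂ => Real.log ‖w‖ := by
  have hdecompose : (fun w : ℂ => Real.log ‖w‖) = (fun w => Real.posLog ‖w‖) - logKernel 1 := by
    funext w
    simp [logKernel, ← Real.posLog_sub_posLog_inv (x := ‖w‖)]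
  rw [hdecompose]
  exact (Continuous.locallyIntegrable (by fun_prop)).sub (locallyIntegrable_logKernel zero_le_one)

lemma circleAverage_log_norm (hh : 0 < h) (hw : w ≠ 0) :
    Real.circleAverage (fun w => Real.log ‖w‖) w h = logKernel h w + Real.log ‖w‖ := by
  have haverage :=
    circleAverage_log_norm_sub_const_eq_log_radius_add_posLog (a := 0) (c := w) hh.ne'
  have hinv := Real.posLog_sub_posLog_inv (x := h⁻¹ * ‖w‖)
  rw [Real.log_mul (inv_ne_zero hh.ne') (norm_ne_zero_iff.2 hw), Real.log_inv] at hinv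
  simp only [sub_zero] at haverage
  rw [haverage, logKernel, show h / ‖w‖ = (h⁻¹ * ‖w‖)⁻¹ by field_simp]
  linarith

end LogKernel

section Mollification

/-- The regularisation of `v` by the normalised kernel `logKernel h`. -/
noncomputable def mollification (h : ℝ) (v : ℂ → ℝ) (z : ℂ) : ℝ :=
  (∫ w, logKernel h w)⁻¹ * (logKernel h ⋆ v) z

/-- The second difference of `v` at scale `h`, normalised so that it is `1 / 2π` times the Laplacian
of `mollification h v` in the sense of `integral_logKernel_mul_discreteLaplacian`. -/
noncomputable def discreteLaplacian (h : ℝ) (v : ℂ → ℝ) (z : ℂ) : ℝ :=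
  (∫ w, logKernel h w)⁻¹ * (Real.circleAverage v z h - v z)

variable {h R : ℝ} {v : ℂ → ℝ}

lemma BoundedSupportMeasurable.mollification (hv : BoundedSupportMeasurable v) (hh : 0 ≤ h) :
    LocallyBoundedMeasurable (mollification h v) :=
  (locallyBoundedMeasurable_convolution (measurable_logKernel h)
    (locallyIntegrable_logKernel hh) hv).const_mul _

lemma BoundedSupportMeasurable.discreteLaplacian (hv : BoundedSupportMeasurable v) (h : ℝ) :
    BoundedSupportMeasurable (discreteLaplacian h v) :=
  ((hv.circleAverage h).sub hv).const_mul _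

lemma logKernel_convolution_eq_circleAverage_sub (hv : BoundedSupportMeasurable v) (hh : 0 < h)
    (z : ℂ) :
    (logKernel h ⋆ v) z = Real.circleAverage ((fun w => Real.log ‖w‖) ⋆ v) z h -
      ((fun w => Real.log ‖w‖) ⋆ v) z := by
  have hlog : Measurable fun w : ℂ => Real.log ‖w‖ := by fun_prop
  rw [circleAverage_convolution_left hlog locallyIntegrable_log_norm hv, eq_sub_iff_add_eq]
  simp only [convolution_lsmul, smul_eq_mul]
  rw [← integral_add (integrable_mul_comp_sub (measurable_logKernel h)
    (locallyIntegrable_logKernel hh.le) hv z)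
    (integrable_mul_comp_sub hlog locallyIntegrable_log_norm hv z)]
  refine integral_congr_ae ?_
  filter_upwards [Measure.ae_ne volume 0] with w hw
  rw [circleAverage_log_norm hh hw, add_mul]

-- Both sides are mixed second differences, at scales `h` and `R`, of the potential `log ‖·‖ ⋆ v`.
lemma logKernel_convolution_circleAverage_sub (hv : BoundedSupportMeasurable v) (hh : 0 < h)
    (hR : 0 < R) (z : ℂ) :
    (logKernel R ⋆ fun y => Real.circleAverage v y h - v y) z =
      Real.circleAverage (logKernel h ⋆ v) z R - (logKernel h ⋆ v) z := by
  have hN := locallyBoundedMeasurable_convolution (k := fun w => Real.log ‖w‖) (by fun_prop)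
    locallyIntegrable_log_norm hv
  rw [convolution_sub (measurable_logKernel R) (locallyIntegrable_logKernel hR.le)
    (hv.circleAverage h) hv, ← circleAverage_convolution_right (measurable_logKernel R)
    (locallyIntegrable_logKernel hR.le) hv]
  simp only [funext (logKernel_convolution_eq_circleAverage_sub hv hh),
    funext (logKernel_convolution_eq_circleAverage_sub hv hR)]
  rw [Real.circleAverage_fun_sub ((hN.circleAverage R).circleIntegrable z h)
    (hN.circleIntegrable z h), Real.circleAverage_fun_sub
    ((hN.circleAverage h).circleIntegrable z R) (hN.circleIntegrable z R), hN.circleAverage_comm]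
  ring

lemma integrable_logKernel_mul_discreteLaplacian (hv : BoundedSupportMeasurable v) (h : ℝ)
    (hR : 0 ≤ R) (z : ℂ) : Integrable fun w => logKernel R (z - w) * discreteLaplacian h v w :=
  integrable_comp_sub_mul (measurable_logKernel R) (locallyIntegrable_logKernel hR)
    (hv.discreteLaplacian h) z

lemma integral_logKernel_mul_discreteLaplacian (hv : BoundedSupportMeasurable v) (hh : 0 < h)
    (hR : 0 < R) (z : ℂ) :
    ∫ w, logKernel R (z - w) * discreteLaplacian h v w =
      Real.circleAverage (mollification h v) z R - mollification h v z := by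
  have hsecond := logKernel_convolution_circleAverage_sub hv hh hR z
  have mollification_def : mollification h v =
      fun y => (∫ w, logKernel h w)⁻¹ * (logKernel h ⋆ v) y := rfl
  simp only [mollification_def, circleAverage_const_mul, ← mul_sub, ← hsecond]
  simp only [discreteLaplacian, mul_left_comm _ (_)⁻¹, integral_const_mul, convolution_lsmul_swap,
    smul_eq_mul]

lemma logKernel_convolution_eq_integral_add (h : ℝ) (v : ℂ → ℝ) (z : ℂ) :
    (logKernel h ⋆ v) z = ∫ w, logKernel h w * v (z + w) := by
  rw [convolution_lsmul_swap, ← integral_add_left_eq_self _ z]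
  simp [logKernel_neg]

lemma mollification_le (hv : BoundedSupportMeasurable v) (hh : 0 < h) {z : ℂ} {t : ℝ}
    (ht : ∀ w, ‖w‖ < h → v (z - w) ≤ t) : mollification h v z ≤ t := by
  rw [mollification, inv_mul_le_iff₀ (integral_logKernel_pos hh), convolution_lsmul,
    ← integral_mul_const]
  refine integral_mono (integrable_mul_comp_sub (measurable_logKernel h)
    (locallyIntegrable_logKernel hh.le) hv z) ((integrable_logKernel hh.le).mul_const t) fun w => ?_
  by_cases hw : ‖w‖ < h
  · exact mul_le_mul_of_nonneg_left (ht w hw) (logKernel_nonneg h w)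
  · simp [logKernel_eq_zero hh.le (not_lt.1 hw)]

/-- Bounded functions `v ≤ 0` that satisfy the sub-mean value inequality on the closed discs
contained in the disc of radius `ρ` about `0`, cut off outside a bounded set. The truncations of a
subharmonic function are of this kind. -/
structure BoundedSubharmonic (ρ : ℝ) (v : ℂ → ℝ) : Prop extends BoundedSupportMeasurable v where
  nonpos : ∀ z, v z ≤ 0
  le_circleAverage : ∀ z r, 0 < r → ‖z‖ + r < ρ → v z ≤ Real.circleAverage v z r

namespace BoundedSubharmonic

variable {ρ r r₀ s : ℝ} {z : ℂ}

lemma discreteLaplacian_nonneg (hv : BoundedSubharmonic ρ v) (hh : 0 < h) (hz : ‖z‖ + h < ρ) :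
    0 ≤ discreteLaplacian h v z :=
  mul_nonneg (inv_nonneg.2 (integral_logKernel_pos hh).le)
    (sub_nonneg.2 (hv.le_circleAverage z h hh hz))

lemma mollification_nonpos (hv : BoundedSubharmonic ρ v) (hh : 0 < h) (z : ℂ) :
    mollification h v z ≤ 0 :=
  mollification_le hv.toBoundedSupportMeasurable hh fun _ _ => hv.nonpos _

lemma le_mollification (hv : BoundedSubharmonic ρ v) (hh : 0 < h) (hz : ‖z‖ + h < ρ) :
    v z ≤ mollification h v z := by
  have hint : Integrable fun w => logKernel h w * v (z + w) := by
    simpa [logKernel_neg] using (integrable_mul_comp_sub (measurable_logKernel h)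
      (locallyIntegrable_logKernel hh.le) hv.toBoundedSupportMeasurable z).comp_neg
  rw [mollification, le_inv_mul_iff₀ (integral_logKernel_pos hh),
    logKernel_convolution_eq_integral_add, ← integral_mul_const]
  have hradial := setIntegral_comp_norm_le_of_le_circleAverage
    (g := fun r => Real.posLog (h / r) * v z) MeasurableSet.univ
    ((integrable_logKernel hh.le).mul_const _).integrableOn hint.integrableOn fun r _ hr => ?_
  · simpa [logKernel] using hradial
  · simp only [logKernel]
    rw [circleAverage_norm_mul (fun r => Real.posLog (h / r)) _ hr.le]
    simp only [add_comm z, Real.circleAverage_map_add_const]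
    rcases lt_or_ge r h with hrh | hrh
    · exact mul_le_mul_of_nonneg_left (hv.le_circleAverage z r hr (by linarith))
        Real.posLog_nonneg
    · have hzero : Real.posLog (h / r) = 0 := by
        simpa [logKernel, abs_of_pos hr] using
          logKernel_eq_zero hh.le (w := (r : ℂ)) (by simpa [abs_of_pos hr])
      simp [hzero]

lemma circleAverage_mollification_le (hv : BoundedSubharmonic ρ v) (hh : 0 < h)
    (hρ : r₀ + h ≤ ρ) (hr : 0 < r) (hsr : s ≤ r) (hrr₀ : r < r₀) :
    Real.circleAverage (mollification h v) 0 r ≤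
      -((Real.log r₀ - Real.log r) * ∫ w in Metric.ball 0 s, discreteLaplacian h v w) := by
  have hr₀ : 0 < r₀ := hr.trans hrr₀
  have hbs := hv.toBoundedSupportMeasurable
  have hint {t : ℝ} (ht : 0 < t) := integrable_logKernel_mul_discreteLaplacian hbs h ht.le 0
  have hnonpos : Real.circleAverage (mollification h v) 0 r₀ ≤ 0 :=
    Real.circleAverage_mono_on_of_le_circle ((hbs.mollification hh.le).circleIntegrable 0 r₀)
      fun w _ => hv.mollification_nonpos hh w
  have hmass : (Real.log r₀ - Real.log r) * ∫ w in Metric.ball 0 s, discreteLaplacian h v w ≤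
      ∫ w, (logKernel r₀ (0 - w) * discreteLaplacian h v w -
        logKernel r (0 - w) * discreteLaplacian h v w) := by
    rw [← integral_const_mul, ← integral_indicator measurableSet_ball]
    refine integral_mono_ae (((hbs.discreteLaplacian h).integrable.const_mul _).indicator
      measurableSet_ball) ((hint hr₀).sub (hint hr)) ?_
    filter_upwards [Measure.ae_ne volume 0] with w hw0
    simp only [zero_sub, logKernel_neg, ← sub_mul]
    refine indicator_apply_le' (fun hw => ?_) fun _ => ?_
    · have hws := mem_ball_zero_iff.1 hw
      rw [logKernel_eq_log_sub_log hw0 (by linarith), logKernel_eq_log_sub_log hw0 (by linarith),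
        sub_sub_sub_cancel_right]
    · rcases lt_or_ge ‖w‖ r₀ with hw | hw
      · exact mul_nonneg (sub_nonneg.2 (logKernel_mono hr.le hrr₀.le w))
          (hv.discreteLaplacian_nonneg hh (by linarith))
      · rw [logKernel_eq_zero hr₀.le hw, logKernel_eq_zero hr.le (hrr₀.le.trans hw), sub_zero,
          zero_mul]
  rw [integral_sub (hint hr₀) (hint hr), integral_logKernel_mul_discreteLaplacian hbs hh hr₀,
    integral_logKernel_mul_discreteLaplacian hbs hh hr] at hmass
  linarith

lemma integral_logKernel_mul_discreteLaplacian_mono (hv : BoundedSubharmonic ρ v) (hh : 0 < h)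
    (hr : 0 < r) (hrR : r ≤ R) (hz : ‖z‖ + R + h ≤ ρ) :
    ∫ w, logKernel r (z - w) * discreteLaplacian h v w ≤
      ∫ w, logKernel R (z - w) * discreteLaplacian h v w := by
  have hR := hr.trans_le hrR
  have hbs := hv.toBoundedSupportMeasurable
  refine integral_mono (integrable_logKernel_mul_discreteLaplacian hbs h hr.le z)
    (integrable_logKernel_mul_discreteLaplacian hbs h hR.le z) fun w => ?_
  rcases lt_or_ge ‖z - w‖ R with hw | hw
  · refine mul_le_mul_of_nonneg_right (logKernel_mono hr.le hrR _)
      (hv.discreteLaplacian_nonneg hh ?_)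
    linarith [norm_sub_norm_le w z, norm_sub_rev w z]
  · simp [logKernel_eq_zero hR.le hw, logKernel_eq_zero hr.le (hrR.trans hw)]

lemma le_mollification_add_potential (hv : BoundedSubharmonic ρ v) (hh : 0 < h)
    (hρ : r₀ + h ≤ ρ) (hR : 0 < R) (hz : ‖z‖ + R ≤ r₀) :
    (∫ w in Metric.ball 0 r₀, v w) / volume.real (Metric.ball z R) ≤
      mollification h v z + ∫ w, logKernel R (z - w) * discreteLaplacian h v w := by
  have hbs := hv.toBoundedSupportMeasurable
  have hU := hbs.mollification hh.le
  have hvolume : 0 < volume.real (Metric.ball z R) :=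
    ENNReal.toReal_pos (Metric.measure_ball_pos _ _ hR).ne' measure_ball_lt_top.ne
  have hsub : Metric.ball z R ⊆ Metric.ball 0 r₀ :=
    Metric.ball_subset_ball' (by rw [dist_zero_right]; linarith)
  rw [div_le_iff₀' hvolume]
  calc ∫ w in Metric.ball 0 r₀, v w ≤ ∫ w in Metric.ball z R, v w := by
        rw [← neg_le_neg_iff, ← integral_neg, ← integral_neg]
        exact setIntegral_mono_set hbs.integrable.integrableOn.neg
          (.of_forall fun w => neg_nonneg.2 (hv.nonpos w)) hsub.eventuallyLE
    _ ≤ ∫ w in Metric.ball z R, mollification h v w := by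
        refine setIntegral_mono_on hbs.integrable.integrableOn (hU.integrableOn_ball z R)
          measurableSet_ball fun w hw => hv.le_mollification hh ?_
        linarith [mem_ball_zero_iff.1 (hsub hw)]
    _ ≤ _ := by
        refine setIntegral_ball_le_of_circleAverage_le (hU.integrableOn_ball z R)
          fun r hr hrR => ?_
        have hriesz := integral_logKernel_mul_discreteLaplacian hbs hh hr z
        linarith [hv.integral_logKernel_mul_discreteLaplacian_mono (z := z) hh hr hrR.le
          (by linarith)]

end BoundedSubharmonic

end Mollification

section Annulus

/-- The half-open annulus `s ≤ |z| < r`. -/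
def annulus (s r : ℝ) : Set ℂ := norm ⁻¹' Set.Ico s r

variable {s r : ℝ}

lemma measurableSet_annulus (s r : ℝ) : MeasurableSet (annulus s r) :=
  measurable_norm measurableSet_Ico

lemma annulus_subset_ball (s r : ℝ) : annulus s r ⊆ Metric.ball 0 r :=
  fun _ hz => mem_ball_zero_iff.2 hz.2

lemma iUnion_annulus (hr : 0 < r) : ⋃ n : ℕ, annulus (r / (n + 2)) r = Metric.ball 0 r \ {0} := by
  ext z
  simp only [mem_iUnion, annulus, mem_preimage, mem_Ico, Set.mem_sdiff, mem_ball_zero_iff,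
    mem_singleton_iff]
  constructor
  · rintro ⟨n, hnz, hzr⟩
    exact ⟨hzr, norm_pos_iff.1 ((by positivity : 0 < r / (n + 2)).trans_le hnz)⟩
  · rintro ⟨hzr, hz⟩
    obtain ⟨n, hn⟩ := exists_nat_gt (r / ‖z‖)
    rw [div_lt_iff₀ (norm_pos_iff.2 hz)] at hn
    refine ⟨n, ?_, hzr⟩
    rw [div_le_iff₀ (by positivity)]
    linarith [norm_nonneg z]

lemma setLIntegral_ball_eq_iSup_annulus (hr : 0 < r) (f : ℂ → ℝ≥0∞) :
    ∫⁻ z in Metric.ball 0 r, f z = ⨆ n : ℕ, ∫⁻ z in annulus (r / (n + 2)) r, f z := by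
  have hmono : Monotone fun n : ℕ => annulus (r / (n + 2)) r := fun m n hmn =>
    Set.preimage_mono (Set.Ico_subset_Ico_left (by gcongr))
  rw [← setLIntegral_iUnion_of_directed _ hmono.directed_le, iUnion_annulus hr]
  exact setLIntegral_congr (sdiff_null_ae_eq_self (measure_singleton 0)).symm

lemma integrableOn_annulus_comp_norm {g : ℝ → ℝ} (hg : ContinuousOn g (Set.Icc s r)) :
    IntegrableOn (fun z : ℂ => g ‖z‖) (annulus s r) := by
  have hcompact : IsCompact (norm ⁻¹' Set.Icc s r : Set ℂ) :=
    (isCompact_closedBall (0 : ℂ) r).of_isClosed_subset (isClosed_Icc.preimage continuous_norm)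
      fun z hz => mem_closedBall_zero_iff.2 hz.2
  exact ((hg.comp continuous_norm.continuousOn (Set.mapsTo_preimage _ _)).integrableOn_compact
    hcompact).mono_set (Set.preimage_mono Set.Ico_subset_Icc_self)

lemma integrableOn_annulus_norm_sq_inv (hs : 0 < s) (r : ℝ) :
    IntegrableOn (fun z : ℂ => (‖z‖ ^ 2)⁻¹) (annulus s r) :=
  integrableOn_annulus_comp_norm (g := fun x => (x ^ 2)⁻¹) <|
    (continuousOn_pow 2).inv₀ fun _ hx => (pow_pos (hs.trans_le hx.1) 2).ne'

lemma integrableOn_annulus_norm_pow_mul_exp (hs : 0 < s) (k : ℕ) (r c m : ℝ) :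
    IntegrableOn (fun z : ℂ => ‖z‖ ^ k * Real.exp ((c - Real.log ‖z‖) * m)) (annulus s r) :=
  integrableOn_annulus_comp_norm (g := fun x => x ^ k * Real.exp ((c - Real.log x) * m)) <|
    (continuousOn_pow k).mul <| ContinuousOn.rexp <| (continuousOn_const.sub <|
      Real.continuousOn_log.mono fun _ hx => (hs.trans_le hx.1).ne').mul continuousOn_const

lemma not_integrableOn_ball_norm_sq_inv (hr : 0 < r) :
    ¬ IntegrableOn (fun z : ℂ => (‖z‖ ^ 2)⁻¹) (Metric.ball 0 r) := by
  rw [integrableOn_fun_norm_addHaar volume (f := fun y : ℝ => (y ^ 2)⁻¹)]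
  intro h
  refine (lt_irrefl (-1 : ℝ)) ((intervalIntegral.integrableOn_Ioo_rpow_iff hr).1 ?_)
  refine h.congr_fun (fun y hy => ?_) measurableSet_Ioo
  have hy0 : y ≠ 0 := hy.1.ne'
  simp only [Complex.finrank_real_complex, Nat.add_one_sub_one, pow_one, smul_eq_mul,
    Real.rpow_neg_one]
  field_simp

lemma exists_lt_setIntegral_annulus_norm_sq_inv (hr : 0 < r) (C : ℝ) :
    ∃ s, 0 < s ∧ s < r ∧ C < ∫ z in annulus s r, (‖z‖ ^ 2)⁻¹ := by
  have hnonneg (z : ℂ) : 0 ≤ (‖z‖ ^ 2)⁻¹ := by positivity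
  have htop : ∫⁻ z in Metric.ball (0 : ℂ) r, ENNReal.ofReal ((‖z‖ ^ 2)⁻¹) = ⊤ := by
    by_contra hne
    refine not_integrableOn_ball_norm_sq_inv hr ⟨by fun_prop, ?_⟩
    rw [hasFiniteIntegral_iff_ofReal (.of_forall hnonneg)]
    exact lt_top_iff_ne_top.2 hne
  have hC : ENNReal.ofReal C < ⨆ n : ℕ, ∫⁻ z in annulus (r / (n + 2)) r,
      ENNReal.ofReal ((‖z‖ ^ 2)⁻¹) := by
    rw [← setLIntegral_ball_eq_iSup_annulus hr, htop]
    exact ENNReal.ofReal_lt_top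
  obtain ⟨n, hn⟩ := lt_iSup_iff.1 hC
  have hs : 0 < r / ((n : ℝ) + 2) := by positivity
  refine ⟨r / (n + 2), hs, div_lt_self hr (by linarith [(n.cast_nonneg : (0 : ℝ) ≤ n)]), ?_⟩
  rw [← ofReal_integral_eq_lintegral_ofReal (integrableOn_annulus_norm_sq_inv hs r)
    (.of_forall hnonneg)] at hn
  exact (ENNReal.ofReal_lt_ofReal_iff'.1 hn).1

end Annulus

section MassBound

variable {ρ h r₀ s : ℝ} {v : ℂ → ℝ}

/-- The positive measure with density the discrete Laplacian of `v` at scale `h`, a stand-in for the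
Riesz measure of `v`. `ENNReal.ofReal` discards the negative part of the density, which is supported
near the boundary of the domain of subharmonicity. -/
noncomputable def approxRieszMeasure (h : ℝ) (v : ℂ → ℝ) : Measure ℂ :=
  volume.withDensity fun w => ENNReal.ofReal (discreteLaplacian h v w)

lemma BoundedSupportMeasurable.isFiniteMeasure_approxRieszMeasure
    (hv : BoundedSupportMeasurable v) (h : ℝ) : IsFiniteMeasure (approxRieszMeasure h v) :=
  isFiniteMeasure_withDensity_ofReal (hv.discreteLaplacian h).integrable.2

lemma BoundedSubharmonic.setIntegral_approxRieszMeasure (hv : BoundedSubharmonic ρ v) (hh : 0 < h)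
    (hs : s + h ≤ ρ) {A : Set ℂ} (hA : MeasurableSet A) (hsub : A ⊆ Metric.ball 0 s) (f : ℂ → ℝ) :
    ∫ w in A, f w ∂approxRieszMeasure h v = ∫ w in A, f w * discreteLaplacian h v w := by
  rw [approxRieszMeasure, setIntegral_withDensity_eq_setIntegral_toReal_smul
    (hv.toBoundedSupportMeasurable.discreteLaplacian h).measurable.ennreal_ofReal (by simp) _ hA]
  refine setIntegral_congr_fun hA fun w hw => ?_
  have hnonneg : 0 ≤ discreteLaplacian h v w :=
    hv.discreteLaplacian_nonneg hh (by linarith [mem_ball_zero_iff.1 (hsub hw)])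
  simp only [smul_eq_mul, ENNReal.toReal_ofReal hnonneg, mul_comm]

lemma BoundedSubharmonic.measureReal_approxRieszMeasure (hv : BoundedSubharmonic ρ v) (hh : 0 < h)
    (hs : s + h ≤ ρ) :
    (approxRieszMeasure h v).real (Metric.ball 0 s) =
      ∫ w in Metric.ball 0 s, discreteLaplacian h v w := by
  simpa using hv.setIntegral_approxRieszMeasure hh hs measurableSet_ball subset_rfl fun _ => 1

lemma BoundedSupportMeasurable.integrableOn_norm_pow_mul_exp_neg
    (hv : BoundedSupportMeasurable v) (k : ℕ) (r : ℝ) :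
    IntegrableOn (fun z => ‖z‖ ^ k * Real.exp (-v z)) (Metric.ball 0 r) := by
  have hexp := (hv.locallyBoundedMeasurable.exp_neg.integrableOn_ball 0 r)
  refine hexp.bdd_mul (c := |r| ^ k) (by fun_prop) ?_
  filter_upwards [ae_restrict_mem measurableSet_ball] with z hz
  rw [Real.norm_of_nonneg (by positivity)]
  gcongr
  exact (mem_ball_zero_iff.1 hz).le.trans (le_abs_self r)

lemma BoundedSubharmonic.setIntegral_annulus_le (hv : BoundedSubharmonic ρ v) (k : ℕ)
    (hh : 0 < h) (hρ : r₀ + h ≤ ρ) (hs : 0 < s) :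
    ∫ z in annulus s r₀, ‖z‖ ^ k * Real.exp ((Real.log r₀ - Real.log ‖z‖) *
        ∫ w in Metric.ball 0 s, discreteLaplacian h v w) ≤
      ∫ z in Metric.ball 0 r₀, ‖z‖ ^ k * Real.exp (-v z) := by
  set m := ∫ w in Metric.ball 0 s, discreteLaplacian h v w
  have hbs := hv.toBoundedSupportMeasurable
  have hU := hbs.mollification hh.le
  have hball := hbs.integrableOn_norm_pow_mul_exp_neg k r₀
  have hle {z : ℂ} (hz : z ∈ annulus s r₀) :
      ‖z‖ ^ k * Real.exp (-mollification h v z) ≤ ‖z‖ ^ k * Real.exp (-v z) := by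
    gcongr
    exact hv.le_mollification hh (by linarith [hz.2])
  have hannulus : IntegrableOn (fun z => ‖z‖ ^ k * Real.exp (-mollification h v z))
      (annulus s r₀) := by
    refine (hball.mono_set (annulus_subset_ball s r₀)).mono'
      ((measurable_norm.pow_const k).mul hU.exp_neg.measurable).aestronglyMeasurable ?_
    filter_upwards [ae_restrict_mem (measurableSet_annulus s r₀)] with z hz
    rw [Real.norm_of_nonneg (by positivity)]
    exact hle hz
  calc _ ≤ ∫ z in annulus s r₀, ‖z‖ ^ k * Real.exp (-mollification h v z) := by
        refine setIntegral_comp_norm_le_of_le_circleAverage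
          (g := fun r => r ^ k * Real.exp ((Real.log r₀ - Real.log r) * m)) measurableSet_Ico
          (integrableOn_annulus_norm_pow_mul_exp hs k r₀ _ m) hannulus fun r hr hr0 => ?_
        rw [circleAverage_norm_mul (fun r => r ^ k) _ hr0.le]
        refine mul_le_mul_of_nonneg_left (le_trans ?_ (hU.exp_neg_circleAverage_le 0 r))
          (by positivity)
        rw [Real.exp_le_exp]
        linarith [hv.circleAverage_mollification_le hh hρ hr0 hr.1 hr.2]
    _ ≤ ∫ z in annulus s r₀, ‖z‖ ^ k * Real.exp (-v z) :=
        setIntegral_mono_on hannulus (hball.mono_set (annulus_subset_ball s r₀))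
          (measurableSet_annulus s r₀) fun z => hle
    _ ≤ _ := setIntegral_mono_set hball (.of_forall fun z => by positivity)
        (annulus_subset_ball s r₀).eventuallyLE

lemma le_pow_mul_exp_log_sub_log_mul {k : ℕ} {m r : ℝ} (hs : 0 < s) (hs₀ : s < r₀)
    (hsr : s ≤ r) (hr : r ≤ r₀)
    (hm : 2 * k + 2 - Real.log 2 / (Real.log r₀ - Real.log s) ≤ m) :
    r₀ ^ (2 * k + 2) / 2 * (r ^ 2)⁻¹ ≤
      r ^ (2 * k) * Real.exp ((Real.log r₀ - Real.log r) * m) := by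
  have hr0 := hs.trans_le hsr
  have hr₀ := hs.trans hs₀
  have hL : 0 < Real.log r₀ - Real.log s := sub_pos.2 (Real.log_lt_log hs hs₀)
  set t := Real.log r₀ - Real.log r with ht
  have ht0 : 0 ≤ t := sub_nonneg.2 (Real.log_le_log hr0 hr)
  have htL : t ≤ Real.log r₀ - Real.log s := sub_le_sub_left (Real.log_le_log hs hsr) _
  have hdefect : Real.log 2 / (Real.log r₀ - Real.log s) * t ≤ Real.log 2 := by
    rw [div_mul_eq_mul_div, div_le_iff₀ hL]
    exact mul_le_mul_of_nonneg_left htL (Real.log_nonneg one_le_two)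
  have hexponent : ((2 * k + 2 : ℕ) : ℝ) * t - Real.log 2 ≤ t * m := by
    push_cast
    linarith [mul_le_mul_of_nonneg_right hm ht0]
  have hexp : Real.exp (((2 * k + 2 : ℕ) : ℝ) * t - Real.log 2) = (r₀ / r) ^ (2 * k + 2) / 2 := by
    rw [Real.exp_sub, Real.exp_log two_pos, Real.exp_nat_mul, ht, Real.exp_sub, Real.exp_log hr₀,
      Real.exp_log hr0]
  calc r₀ ^ (2 * k + 2) / 2 * (r ^ 2)⁻¹ = r ^ (2 * k) * ((r₀ / r) ^ (2 * k + 2) / 2) := by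
        rw [div_pow, pow_add r]
        field_simp
    _ ≤ _ := by
        rw [← hexp]
        gcongr

-- A mass `2k + 2` at the origin would make `|z|^{2k} e^{-v}` comparable to `|z|^{-2}`.
lemma exists_measureReal_approxRieszMeasure_le (hr₀ : 0 < r₀) (k : ℕ) (I : ℝ) :
    ∃ s, 0 < s ∧ s < r₀ ∧ ∃ β : ℝ, β < 2 * k + 2 ∧
      ∀ (v : ℂ → ℝ) (h ρ : ℝ), BoundedSubharmonic ρ v → 0 < h → r₀ + h ≤ ρ →
        ∫ z in Metric.ball 0 r₀, ‖z‖ ^ (2 * k) * Real.exp (-v z) ≤ I →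
        (approxRieszMeasure h v).real (Metric.ball 0 s) ≤ β := by
  obtain ⟨s, hs, hs₀, hdiverge⟩ :=
    exists_lt_setIntegral_annulus_norm_sq_inv hr₀ (I / (r₀ ^ (2 * k + 2) / 2))
  have hL : 0 < Real.log r₀ - Real.log s := sub_pos.2 (Real.log_lt_log hs hs₀)
  refine ⟨s, hs, hs₀, 2 * k + 2 - Real.log 2 / (Real.log r₀ - Real.log s),
    sub_lt_self _ (div_pos (Real.log_pos one_lt_two) hL), fun v h ρ hv hh hρ hI => ?_⟩
  rw [hv.measureReal_approxRieszMeasure hh (by linarith : s + h ≤ ρ)]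
  by_contra! hm
  have hlower := setIntegral_mono_on ((integrableOn_annulus_norm_sq_inv hs r₀).const_mul _)
    (integrableOn_annulus_norm_pow_mul_exp hs _ _ _ _) (measurableSet_annulus s r₀)
    fun z hz => le_pow_mul_exp_log_sub_log_mul hs hs₀ hz.1 hz.2.le hm.le
  rw [integral_const_mul] at hlower
  rw [div_lt_iff₀' (by positivity)] at hdiverge
  linarith [hv.setIntegral_annulus_le (2 * k) hh hρ hs]

end MassBound

section Potential

lemma ofReal_exp_average_le {α : Type*} [MeasurableSpace α] (μ : Measure α) [IsFiniteMeasure μ]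
    [NeZero μ] {f : α → ℝ} (hf : Integrable f μ) :
    ENNReal.ofReal (Real.exp (⨍ x, f x ∂μ)) ≤ ⨍⁻ x, ENNReal.ofReal (Real.exp (f x)) ∂μ := by
  have hexp : AEStronglyMeasurable (fun x => Real.exp (f x)) μ :=
    Real.continuous_exp.comp_aestronglyMeasurable hf.aestronglyMeasurable
  by_cases hint : Integrable (fun x => Real.exp (f x)) μ
  · rw [laverage_eq, ← ofReal_average hint (.of_forall fun x => (Real.exp_pos _).le)]
    exact ENNReal.ofReal_le_ofReal (convexOn_exp.map_average_le Real.continuous_exp.continuousOn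
      isClosed_univ (by simp) hf hint)
  · have htop : ∫⁻ x, ENNReal.ofReal (Real.exp (f x)) ∂μ = ⊤ := by
      by_contra hne
      refine hint ⟨hexp, ?_⟩
      rw [hasFiniteIntegral_iff_ofReal (.of_forall fun x => (Real.exp_pos _).le)]
      exact lt_top_iff_ne_top.2 hne
    rw [laverage_eq, htop, ENNReal.top_div_of_ne_top (measure_ne_top μ _)]
    exact le_top

-- The summand `1` covers `μ = 0` and the junk value `0` of the integral of a non-integrable `f`.
lemma ofReal_exp_mul_integral_le {α : Type*} [MeasurableSpace α] (μ : Measure α)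
    [IsFiniteMeasure μ] {f : α → ℝ} (hf : ∀ x, 0 ≤ f x) {p b : ℝ} (hb : p * μ.real Set.univ ≤ b) :
    ENNReal.ofReal (Real.exp (p * ∫ x, f x ∂μ)) ≤
      1 + ⨍⁻ x, ENNReal.ofReal (Real.exp (b * f x)) ∂μ := by
  rcases eq_zero_or_neZero μ with rfl | _
  · simp
  by_cases hint : Integrable f μ
  swap
  · simp [integral_undef hint]
  have haverage : p * ∫ x, f x ∂μ = ⨍ x, p * μ.real Set.univ * f x ∂μ := by
    have hmass : μ.real Set.univ ≠ 0 := measureReal_univ_ne_zero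
    rw [average_eq, integral_const_mul, smul_eq_mul]
    field_simp
  rw [haverage]
  refine (ofReal_exp_average_le μ (hint.const_mul _)).trans (le_add_left ?_)
  rw [laverage_eq, laverage_eq]
  gcongr with x
  exact hf x

lemma exists_lintegral_norm_sub_rpow_le {γ : ℝ} (hγ : γ < 2) :
    ∃ C : ℝ≥0∞, C < ⊤ ∧ ∀ w : ℂ, ‖w‖ < 1 →
      ∫⁻ z in Metric.ball (0 : ℂ) 1, ENNReal.ofReal (‖z - w‖ ^ (-γ)) ≤ C := by
  have hint : IntegrableOn (fun z : ℂ => ‖z‖ ^ (-γ)) (Metric.ball 0 2) := by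
    refine integrableOn_ball_of_norm_le_rpow (by simp) (C := 1) (α := γ) (by simpa using hγ)
      (.of_forall fun z => ?_)
      (measurable_norm.pow_const _).aestronglyMeasurable
    rw [Real.norm_of_nonneg (by positivity), one_mul]
  refine ⟨∫⁻ z in Metric.ball (0 : ℂ) 2, ENNReal.ofReal (‖z‖ ^ (-γ)), ?_, fun w hw => ?_⟩
  · rw [← hasFiniteIntegral_iff_ofReal (.of_forall fun z => by positivity)]
    exact hint.2
  · have htranslate := measurePreserving_sub_right (volume : Measure ℂ) w
    rw [← htranslate.setLIntegral_comp_preimage measurableSet_ball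
      (f := fun z => ENNReal.ofReal (‖z‖ ^ (-γ))) (measurable_norm.pow_const _).ennreal_ofReal]
    refine lintegral_mono_set fun z hz => ?_
    rw [mem_preimage, mem_ball_zero_iff]
    linarith [norm_sub_le z w, mem_ball_zero_iff.1 hz]

lemma rpow_neg_mul_rpow_neg_le_add {x y a b : ℝ} (hx : 0 < x) (hy : 0 < y) (ha : 0 ≤ a)
    (hb : 0 ≤ b) : x ^ (-a) * y ^ (-b) ≤ x ^ (-(a + b)) + y ^ (-(a + b)) := by
  rw [neg_add, Real.rpow_add hx, Real.rpow_add hy]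
  rcases le_total x y with hxy | hyx
  · refine le_add_of_le_of_nonneg ?_ (by positivity)
    exact mul_le_mul_of_nonneg_left (Real.rpow_le_rpow_of_nonpos hx hxy (neg_nonpos.2 hb))
      (by positivity)
  · refine le_add_of_nonneg_of_le (by positivity) ?_
    exact mul_le_mul_of_nonneg_right (Real.rpow_le_rpow_of_nonpos hy hyx (neg_nonpos.2 ha))
      (by positivity)

lemma rpow_neg_mul_exp_logKernel_le {a b R : ℝ} {z w : ℂ} (ha : 0 ≤ a) (hb : 0 ≤ b) (hR : 0 < R)
    (hR1 : R ≤ 1) (hz : z ≠ 0) (hz1 : ‖z‖ ≤ 1) :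
    ‖z‖ ^ (-a) * Real.exp (b * logKernel R (z - w)) ≤
      ‖z‖ ^ (-(a + b)) + ‖z - w‖ ^ (-(a + b)) := by
  have hz0 := norm_pos_iff.2 hz
  rcases (logKernel_nonneg R (z - w)).eq_or_lt with hkernel | hkernel
  · rw [← hkernel, mul_zero, Real.exp_zero, mul_one]
    exact le_add_of_le_of_nonneg
      (Real.rpow_le_rpow_of_exponent_ge hz0 hz1 (by linarith)) (by positivity)
  · have hzw : z - w ≠ 0 := fun h0 => by simp [logKernel, h0] at hkernel
    have hzwR : ‖z - w‖ ≤ R := not_lt.1 fun h =>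
      hkernel.ne' (logKernel_eq_zero hR.le h.le)
    have hzw0 := norm_pos_iff.2 hzw
    refine le_trans ?_ (rpow_neg_mul_rpow_neg_le_add hz0 hzw0 ha hb)
    rw [Real.rpow_def_of_pos hzw0, logKernel_eq_log_sub_log hzw hzwR]
    refine mul_le_mul_of_nonneg_left (Real.exp_le_exp.2 ?_) (by positivity)
    linarith [mul_nonpos_of_nonneg_of_nonpos hb (Real.log_nonpos hR.le hR1)]

lemma rpow_neg_mul_exp_potential_le (μ : Measure ℂ) [IsFiniteMeasure μ] {a b p R : ℝ} {z : ℂ}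
    (ha : 0 ≤ a) (hb : 0 ≤ b) (hR : 0 < R) (hR1 : R ≤ 1) (hμ : p * μ.real Set.univ ≤ b)
    (hz : z ≠ 0) (hz1 : ‖z‖ ≤ 1) :
    ENNReal.ofReal (‖z‖ ^ (-a) * Real.exp (p * ∫ w, logKernel R (z - w) ∂μ)) ≤
      ENNReal.ofReal (‖z‖ ^ (-(a + b))) + ⨍⁻ w, (ENNReal.ofReal (‖z‖ ^ (-(a + b))) +
        ENNReal.ofReal (‖z - w‖ ^ (-(a + b)))) ∂μ := by
  have hz0 := norm_pos_iff.2 hz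
  rw [ENNReal.ofReal_mul (by positivity)]
  refine (mul_le_mul_right (ofReal_exp_mul_integral_le μ
    (fun w => logKernel_nonneg R (z - w)) hμ) _).trans ?_
  rw [mul_add, mul_one]
  refine add_le_add (ENNReal.ofReal_le_ofReal
    (Real.rpow_le_rpow_of_exponent_ge hz0 hz1 (by linarith))) ?_
  rw [laverage, laverage, ← lintegral_const_mul' _ _ ENNReal.ofReal_ne_top]
  refine lintegral_mono fun w => ?_
  simp only [← ENNReal.ofReal_mul (Real.rpow_nonneg (norm_nonneg z) _),
    ← ENNReal.ofReal_add (Real.rpow_nonneg (norm_nonneg z) _) (Real.rpow_nonneg (norm_nonneg _) _)]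
  exact ENNReal.ofReal_le_ofReal (rpow_neg_mul_exp_logKernel_le ha hb hR hR1 hz hz1)

lemma exists_lintegral_rpow_neg_mul_exp_potential_le {a b : ℝ} (ha : 0 ≤ a) (hb : 0 ≤ b)
    (hab : a + b < 2) :
    ∃ C : ℝ≥0∞, C < ⊤ ∧ ∀ (μ : Measure ℂ) [IsFiniteMeasure μ] (p R : ℝ),
      (∀ᵐ w ∂μ, ‖w‖ < 1) → p * μ.real Set.univ ≤ b → 0 < R → R ≤ 1 →
      ∫⁻ z in Metric.ball (0 : ℂ) 1,
        ENNReal.ofReal (‖z‖ ^ (-a) * Real.exp (p * ∫ w, logKernel R (z - w) ∂μ)) ≤ C := by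
  obtain ⟨C, hC, hbound⟩ := exists_lintegral_norm_sub_rpow_le hab
  have hcenter := hbound 0 (by simp)
  simp only [sub_zero] at hcenter
  refine ⟨C + (C + C), by simp [hC], fun μ _ p R hsupport hμ hR hR1 => ?_⟩
  calc _ ≤ ∫⁻ z in Metric.ball (0 : ℂ) 1, (ENNReal.ofReal (‖z‖ ^ (-(a + b))) +
        ⨍⁻ w, (ENNReal.ofReal (‖z‖ ^ (-(a + b))) +
          ENNReal.ofReal (‖z - w‖ ^ (-(a + b)))) ∂μ) := by
        refine lintegral_mono_ae ?_
        filter_upwards [ae_restrict_mem measurableSet_ball,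
          ae_restrict_of_ae (Measure.ae_ne volume 0)] with z hz1 hz
        exact rpow_neg_mul_exp_potential_le μ ha hb hR hR1 hμ hz (mem_ball_zero_iff.1 hz1).le
    _ ≤ C + ⨍⁻ _, (C + C) ∂μ := by
        rw [lintegral_add_left (by fun_prop)]
        refine add_le_add hcenter ?_
        simp only [laverage]
        rw [lintegral_lintegral_swap (by fun_prop)]
        refine lintegral_mono_ae ?_
        filter_upwards [Measure.smul_absolutelyContinuous.ae_le hsupport] with w hw
        rw [lintegral_add_left (by fun_prop)]
        exact add_le_add hcenter (hbound w hw)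
    _ ≤ C + (C + C) := by
        gcongr
        rw [laverage_eq, lintegral_const]
        exact ENNReal.div_le_of_le_mul le_rfl

end Potential

section AnnulusBound

variable {a b p r s : ℝ} {k : ℕ} {z : ℂ}

lemma setIntegral_union_le_of_nonneg {α : Type*} [MeasurableSpace α] {μ : Measure α} {f : α → ℝ}
    (hf : ∀ x, 0 ≤ f x) {A B : Set α} (hB : MeasurableSet B) (hAB : Disjoint A B) :
    ∫ x in A ∪ B, f x ∂μ ≤ (∫ x in A, f x ∂μ) + ∫ x in B, f x ∂μ := by
  by_cases hint : IntegrableOn f (A ∪ B) μ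
  · exact (setIntegral_union hAB hB hint.left_of_union hint.right_of_union).le
  · rw [integral_undef hint]
    exact add_nonneg (integral_nonneg hf) (integral_nonneg hf)

lemma ball_union_annulus (hsr : s ≤ r) : Metric.ball 0 s ∪ annulus s r = Metric.ball 0 r := by
  ext w
  simp only [annulus, mem_union, mem_ball_zero_iff, mem_preimage, mem_Ico]
  grind

lemma disjoint_ball_annulus (s r : ℝ) : Disjoint (Metric.ball 0 s) (annulus s r) :=
  Set.disjoint_left.2 fun _ hs hr => hr.1.not_gt (mem_ball_zero_iff.1 hs)

lemma logKernel_half_le_neg_log {w : ℂ} (hr : r ≤ 1) (hz : 0 < ‖z‖) (hzr : ‖z‖ < r)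
    (hwz : 2 * ‖w‖ ≤ ‖z‖) : logKernel (r / 2) (z - w) ≤ -Real.log ‖z‖ := by
  have hzw : ‖z‖ / 2 ≤ ‖z - w‖ := by linarith [norm_sub_norm_le z w]
  have hquotient : r / 2 / ‖z - w‖ ≤ ‖z‖⁻¹ := by
    rw [div_le_iff₀ ((half_pos hz).trans_le hzw), inv_mul_eq_div, le_div_iff₀ hz]
    nlinarith
  calc logKernel (r / 2) (z - w) ≤ Real.posLog ‖z‖⁻¹ :=
        Real.posLog_le_posLog (div_nonneg (by linarith) (norm_nonneg _)) hquotient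
    _ = -Real.log ‖z‖ := by
        rw [Real.posLog_eq_log, Real.log_inv]
        rw [abs_of_pos (inv_pos.2 hz)]
        exact (one_le_inv₀ hz).2 (hzr.le.trans hr)

lemma setIntegral_ball_logKernel_le (μ : Measure ℂ) [IsFiniteMeasure μ] (hs : 0 < s) (hr : r ≤ 1)
    (hz : z ∈ annulus (2 * s) r) :
    ∫ w in Metric.ball 0 r, logKernel (r / 2) (z - w) ∂μ ≤
      -Real.log ‖z‖ * μ.real (Metric.ball 0 s) +
        ∫ w in annulus s r, logKernel (r / 2) (z - w) ∂μ := by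
  have hsr : s ≤ r := by linarith [hz.1, hz.2]
  have hz0 : 0 < ‖z‖ := by linarith [hz.1]
  have hnonneg (w : ℂ) := logKernel_nonneg (r / 2) (z - w)
  rw [← ball_union_annulus hsr]
  refine (setIntegral_union_le_of_nonneg hnonneg (measurableSet_annulus s r)
    (disjoint_ball_annulus s r)).trans (add_le_add_left ?_ _)
  calc ∫ w in Metric.ball 0 s, logKernel (r / 2) (z - w) ∂μ
      ≤ ∫ _ in Metric.ball 0 s, -Real.log ‖z‖ ∂μ := by
        refine integral_mono_of_nonneg (.of_forall hnonneg) (integrable_const _) ?_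
        filter_upwards [ae_restrict_mem measurableSet_ball] with w hw
        exact logKernel_half_le_neg_log hr hz0 hz.2
          (by linarith [mem_ball_zero_iff.1 hw, hz.1])
    _ = _ := by
        rw [integral_const, measureReal_restrict_apply_univ, smul_eq_mul, mul_comm]

lemma pow_mul_exp_potential_le (μ : Measure ℂ) [IsFiniteMeasure μ] (hp : 0 ≤ p) (hs : 0 < s)
    (hr : r ≤ 1) (hμ : p * μ.real (Metric.ball 0 s) ≤ 2 * k + a) (hz : z ∈ annulus (2 * s) r) :
    ‖z‖ ^ (2 * k) * Real.exp (p * ∫ w in Metric.ball 0 r, logKernel (r / 2) (z - w) ∂μ) ≤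
      ‖z‖ ^ (-a) * Real.exp (p * ∫ w in annulus s r, logKernel (r / 2) (z - w) ∂μ) := by
  have hz0 : 0 < ‖z‖ := by linarith [hz.1]
  have hlog : 0 ≤ -Real.log ‖z‖ :=
    neg_nonneg.2 (Real.log_nonpos hz0.le (hz.2.le.trans hr))
  have hpotential := mul_le_mul_of_nonneg_left (setIntegral_ball_logKernel_le μ hs hr hz) hp
  rw [← Real.rpow_natCast, Real.rpow_def_of_pos hz0, Real.rpow_def_of_pos hz0, ← Real.exp_add,
    ← Real.exp_add, Real.exp_le_exp]
  push_cast
  linarith [mul_le_mul_of_nonneg_left hμ hlog]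

-- Mass inside radius `s` acts on `|z| ≥ 2s` like a point mass at `0`; mass outside is small.
lemma exists_setLIntegral_annulus_pow_mul_exp_potential_le (k : ℕ) (ha : 0 ≤ a) (hb : 0 ≤ b)
    (hab : a + b < 2) :
    ∃ C : ℝ≥0∞, C < ⊤ ∧ ∀ (μ : Measure ℂ) [IsFiniteMeasure μ] (p r s : ℝ), 0 ≤ p → 0 < s →
      s ≤ r → r ≤ 1 → p * μ.real (Metric.ball 0 r) ≤ 2 * k + a →
      p * (μ.real (Metric.ball 0 r) - μ.real (Metric.ball 0 s)) ≤ b →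
      ∫⁻ z in annulus (2 * s) (r / 2), ENNReal.ofReal (‖z‖ ^ (2 * k) *
        Real.exp (p * ∫ w in Metric.ball 0 r, logKernel (r / 2) (z - w) ∂μ)) ≤ C := by
  obtain ⟨C, hC, hbound⟩ := exists_lintegral_rpow_neg_mul_exp_potential_le ha hb hab
  refine ⟨C, hC, fun μ _ p r s hp hs hsr hr hball hannulus => ?_⟩
  have hmass : μ.real (Metric.ball 0 r) =
      μ.real (Metric.ball 0 s) + μ.real (annulus s r) := by
    rw [← ball_union_annulus hsr,
      measureReal_union (disjoint_ball_annulus s r) (measurableSet_annulus s r)]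
  have hinner : p * μ.real (Metric.ball 0 s) ≤ 2 * k + a :=
    (mul_le_mul_of_nonneg_left (measureReal_mono (Metric.ball_subset_ball hsr)) hp).trans hball
  calc _ ≤ ∫⁻ z in annulus (2 * s) (r / 2), ENNReal.ofReal (‖z‖ ^ (-a) *
        Real.exp (p * ∫ w in annulus s r, logKernel (r / 2) (z - w) ∂μ)) :=
        setLIntegral_mono' (measurableSet_annulus _ _) fun z hz =>
          ENNReal.ofReal_le_ofReal <| pow_mul_exp_potential_le μ hp hs hr hinner
            ⟨hz.1, by linarith [hz.2]⟩
    _ ≤ ∫⁻ z in Metric.ball (0 : ℂ) 1, ENNReal.ofReal (‖z‖ ^ (-a) *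
        Real.exp (p * ∫ w in annulus s r, logKernel (r / 2) (z - w) ∂μ)) :=
        lintegral_mono_set ((annulus_subset_ball _ _).trans
          (Metric.ball_subset_ball (by linarith)))
    _ ≤ C := by
        refine hbound (μ.restrict (annulus s r)) p (r / 2) ?_ ?_ (by linarith) (by linarith)
        · filter_upwards [ae_restrict_mem (measurableSet_annulus s r)] with w hw
          exact hw.2.trans_le hr
        · rw [measureReal_restrict_apply_univ]
          rwa [hmass, add_sub_cancel_left] at hannulus

variable {h ρ : ℝ} {v : ℂ → ℝ}

lemma BoundedSubharmonic.neg_mollification_le (hv : BoundedSubharmonic ρ v) (hh : 0 < h)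
    (hρ : r + h ≤ ρ) (hr : 0 < r) (hz : ‖z‖ ≤ r / 2) :
    -mollification h v z ≤
      -(∫ w in Metric.ball 0 r, v w) / volume.real (Metric.ball (0 : ℂ) (r / 2)) +
        ∫ w in Metric.ball 0 r, logKernel (r / 2) (z - w) ∂approxRieszMeasure h v := by
  have hsupport : ∫ w in Metric.ball 0 r, logKernel (r / 2) (z - w) * discreteLaplacian h v w =
      ∫ w, logKernel (r / 2) (z - w) * discreteLaplacian h v w := by
    refine setIntegral_eq_integral_of_forall_compl_eq_zero fun w hw => ?_
    rw [mem_ball_zero_iff, not_lt] at hw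
    rw [logKernel_eq_zero (by linarith), zero_mul]
    linarith [norm_sub_norm_le w z, norm_sub_rev w z]
  have hlower := hv.le_mollification_add_potential hh hρ (half_pos hr) (z := z) (by linarith)
  rw [Measure.addHaar_real_ball_center] at hlower
  rw [hv.setIntegral_approxRieszMeasure hh hρ measurableSet_ball subset_rfl, hsupport, neg_div]
  linarith

-- `1 + x ≤ exp x` with `x = 2k log |z| - v z`.
lemma BoundedSupportMeasurable.neg_setIntegral_le (hv : BoundedSupportMeasurable v) (k : ℕ)
    (r : ℝ) :
    -(∫ z in Metric.ball 0 r, v z) ≤ (∫ z in Metric.ball 0 r, ‖z‖ ^ k * Real.exp (-v z)) -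
      ∫ z in Metric.ball (0 : ℂ) r, k * Real.log ‖z‖ := by
  have hneg : IntegrableOn (fun z => -v z) (Metric.ball 0 r) := hv.integrable.neg.integrableOn
  have hlog : IntegrableOn (fun z : ℂ => k * Real.log ‖z‖) (Metric.ball 0 r) :=
    (locallyIntegrable_log_norm.integrableOn_isCompact (isCompact_closedBall 0 r)).mono_set
      Metric.ball_subset_closedBall |>.const_mul _
  rw [← integral_neg, le_sub_iff_add_le, ← integral_add hneg hlog]
  refine integral_mono_ae (hneg.add hlog) (hv.integrableOn_norm_pow_mul_exp_neg k r) ?_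
  filter_upwards [ae_restrict_of_ae (Measure.ae_ne volume 0)] with z hz
  have hpow : ‖z‖ ^ k * Real.exp (-v z) = Real.exp (-v z + k * Real.log ‖z‖) := by
    rw [Real.exp_add, Real.exp_nat_mul, Real.exp_log (norm_pos_iff.2 hz), mul_comm]
  simp only [hpow]
  linarith [Real.add_one_le_exp (-v z + k * Real.log ‖z‖)]

lemma exists_setLIntegral_annulus_pow_mul_exp_neg_mollification_le (k : ℕ) (ha : 0 ≤ a)
    (hb : 0 ≤ b) (hab : a + b < 2) (hp : 0 ≤ p) (hr0 : 0 < r) (hr : r ≤ 1) (I : ℝ) :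
    ∃ C : ℝ≥0∞, C < ⊤ ∧ ∀ (v : ℂ → ℝ) (h ρ s : ℝ), BoundedSubharmonic ρ v → 0 < h → r + h ≤ ρ →
      ∫ z in Metric.ball 0 r, ‖z‖ ^ (2 * k) * Real.exp (-v z) ≤ I → 0 < s → s ≤ r →
      p * (approxRieszMeasure h v).real (Metric.ball 0 r) ≤ 2 * k + a →
      p * ((approxRieszMeasure h v).real (Metric.ball 0 r) -
        (approxRieszMeasure h v).real (Metric.ball 0 s)) ≤ b →
      ∫⁻ z in annulus (2 * s) (r / 2),
        ENNReal.ofReal (‖z‖ ^ (2 * k) * Real.exp (-(p * mollification h v z))) ≤ C := by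
  obtain ⟨C, hC, hbound⟩ := exists_setLIntegral_annulus_pow_mul_exp_potential_le k ha hb hab
  let K := (I - ∫ z in Metric.ball (0 : ℂ) r, (2 * k : ℕ) * Real.log ‖z‖) /
    volume.real (Metric.ball (0 : ℂ) (r / 2))
  refine ⟨ENNReal.ofReal (Real.exp (p * K)) * C, ENNReal.mul_lt_top ENNReal.ofReal_lt_top hC,
    fun v h ρ s hv hh hρ hI hs hsr hball hannulus => ?_⟩
  have hbs := hv.toBoundedSupportMeasurable
  have := hbs.isFiniteMeasure_approxRieszMeasure h
  refine le_trans ?_ (mul_le_mul_right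
    (hbound (approxRieszMeasure h v) p r s hp hs hsr hr hball hannulus) _)
  rw [← lintegral_const_mul' _ _ ENNReal.ofReal_ne_top]
  refine setLIntegral_mono' (measurableSet_annulus _ _) fun z hz => ?_
  rw [← ENNReal.ofReal_mul (Real.exp_nonneg _), mul_left_comm, ← Real.exp_add, ← mul_add,
    ← mul_neg]
  refine ENNReal.ofReal_le_ofReal <| mul_le_mul_of_nonneg_left (Real.exp_le_exp.2 <|
    mul_le_mul_of_nonneg_left ?_ hp) (by positivity)
  refine (hv.neg_mollification_le hh hρ hr0 hz.2.le).trans (add_le_add_left ?_ _)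
  refine div_le_div_of_nonneg_right ?_ measureReal_nonneg
  linarith [hbs.neg_setIntegral_le (2 * k) r]

end AnnulusBound

section Concentration

-- `ν` is the asymptotic mass at the origin, as `i → l` first and the radius shrinks afterwards.
lemma exists_eventually_le_add_frequently_sub_lt {ι : Type*} (l : Filter ι) [l.NeBot]
    {m : ι → ℝ → ℝ} {s β : ℝ} (hs : 0 < s) (hm : ∀ i r, 0 ≤ m i r) (hβ : ∀ i, m i s ≤ β) :
    ∃ ν ≤ β, ∀ ε > 0, ∃ r, 0 < r ∧ r ≤ s ∧ (∀ᶠ i in l, m i r ≤ ν + ε) ∧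
      ∀ t, 0 < t → t ≤ r → ∃ᶠ i in l, ν - ε < m i t := by
  set S : Set ℝ := {c | ∃ r, 0 < r ∧ r ≤ s ∧ ∀ᶠ i in l, m i r ≤ c}
  have hβS : β ∈ S := ⟨s, hs, le_rfl, .of_forall hβ⟩
  have hbdd : BddBelow S := by
    refine ⟨0, ?_⟩
    rintro c ⟨r, -, -, hc⟩
    obtain ⟨i, hi⟩ := hc.exists
    exact (hm i r).trans hi
  refine ⟨sInf S, csInf_le hbdd hβS, fun ε hε => ?_⟩
  obtain ⟨c, ⟨r, hr, hrs, hc⟩, hcν⟩ :=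
    exists_lt_of_csInf_lt ⟨β, hβS⟩ (lt_add_of_pos_right (sInf S) hε)
  refine ⟨r, hr, hrs, hc.mono fun i hi => hi.trans hcν.le, fun t ht htr hfew => ?_⟩
  have hmem : sInf S - ε ∈ S := ⟨t, ht, htr.trans hrs, hfew.mono fun i hi => not_lt.1 hi⟩
  linarith [csInf_le hbdd hmem]

lemma exists_pos_max_mul_sub_add_lt {ν : ℝ} {k : ℕ} (hν : ν < 2 * k + 2) :
    ∃ t > 0, max ((1 + t) * (ν + t) - 2 * k) 0 + (1 + t) * (2 * t) < 2 := by
  have hcontinuous : Continuous fun t : ℝ =>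
      max ((1 + t) * (ν + t) - 2 * k) 0 + (1 + t) * (2 * t) := by fun_prop
  have hzero : max ((1 + 0) * (ν + 0) - 2 * k) 0 + (1 + 0) * (2 * 0) < 2 := by
    have : max (ν - 2 * k) 0 < 2 := max_lt (by linarith) two_pos
    simpa using this
  obtain ⟨t, ht, htpos⟩ := (((hcontinuous.tendsto 0).eventually_lt_const hzero).filter_mono
    (nhdsWithin_le_nhds (s := Set.Ioi 0))).and self_mem_nhdsWithin |>.exists
  exact ⟨t, htpos, ht⟩

lemma exists_frequently_setLIntegral_annulus_le {ρ r₀ I : ℝ} {k : ℕ} {v : ℕ → ℂ → ℝ} {h : ℕ → ℝ}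
    (hv : ∀ n, BoundedSubharmonic ρ (v n)) (hh : ∀ n, 0 < h n) (hρ : ∀ n, r₀ + h n ≤ ρ)
    (hr₀ : 0 < r₀) (hr₀' : r₀ ≤ 1)
    (hI : ∀ n, ∫ z in Metric.ball 0 r₀, ‖z‖ ^ (2 * k) * Real.exp (-v n z) ≤ I) :
    ∃ r, 0 < r ∧ r ≤ r₀ ∧ ∃ p : ℝ, 1 < p ∧ ∃ C : ℝ≥0∞, C < ⊤ ∧ ∀ s, 0 < s → s ≤ r →
      ∃ᶠ n in atTop, ∫⁻ z in annulus (2 * s) (r / 2), ENNReal.ofReal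
        (‖z‖ ^ (2 * k) * Real.exp (-(p * mollification (h n) (v n) z))) ≤ C := by
  obtain ⟨s₀, hs₀, hs₀', β, hβ, hmass⟩ := exists_measureReal_approxRieszMeasure_le hr₀ k I
  obtain ⟨ν, hνβ, hconcentrate⟩ := exists_eventually_le_add_frequently_sub_lt atTop
    (m := fun n r => (approxRieszMeasure (h n) (v n)).real (Metric.ball 0 r)) hs₀
    (fun _ _ => measureReal_nonneg) fun n => hmass (v n) (h n) ρ (hv n) (hh n) (hρ n) (hI n)
  obtain ⟨t, ht, hexponent⟩ := exists_pos_max_mul_sub_add_lt (hνβ.trans_lt hβ)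
  obtain ⟨r, hr, hrs₀, hupper, hlower⟩ := hconcentrate t ht
  have hrr₀ : r ≤ r₀ := hrs₀.trans hs₀'.le
  obtain ⟨C, hC, hbound⟩ := exists_setLIntegral_annulus_pow_mul_exp_neg_mollification_le k
    (le_max_right _ _) (by positivity) hexponent (by positivity : 0 ≤ 1 + t) hr
    (hrr₀.trans hr₀') I
  refine ⟨r, hr, hrr₀, 1 + t, by linarith, C, hC, fun s hs hsr => ?_⟩
  refine ((hlower s hs hsr).and_eventually hupper).mono fun n ⟨hns, hnr⟩ => ?_
  refine hbound (v n) (h n) ρ s (hv n) (hh n) (by linarith [hρ n]) ?_ hs hsr ?_ ?_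
  · refine (setIntegral_mono_set ((hv n).integrableOn_norm_pow_mul_exp_neg _ _)
      (.of_forall fun z => by positivity) ?_).trans (hI n)
    exact (Metric.ball_subset_ball hrr₀).eventuallyLE
  · calc _ ≤ (1 + t) * (ν + t) := by gcongr
      _ ≤ _ := by linarith [le_max_left ((1 + t) * (ν + t) - 2 * k) 0]
  · gcongr
    linarith [hns]

end Concentration

section Truncation

/-- Extended-real-valued functions on the disc of radius `ρ` about `0` that satisfy the conditions
of subharmonicity there, except that `⊥` is an allowed constant value, and are bounded above by `M`.
As in `SubharmonicOn`, circle means are taken of the truncations `ψ ⊔ m`. -/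
structure BoundedAboveSubharmonic (ρ M : ℝ) (ψ : ℂ → EReal) : Prop where
  upperSemicontinuousOn : UpperSemicontinuousOn ψ (Metric.ball 0 ρ)
  le : ∀ z ∈ Metric.ball 0 ρ, ψ z ≤ M
  le_circleAverage : ∀ z r, 0 < r → ‖z‖ + r < ρ → ∀ m : ℝ,
    ψ z ≤ (Real.circleAverage (fun w => (ψ w ⊔ m).toReal) z r : ℝ)

/-- The truncation `ψ ⊔ m`, shifted down by the upper bound `M` of `ψ` and cut off outside the disc
of radius `ρ`. -/
noncomputable def truncation (ρ M : ℝ) (ψ : ℂ → EReal) (m : ℝ) : ℂ → ℝ :=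
  (Metric.ball 0 ρ).indicator fun z => (ψ z ⊔ m).toReal - M

namespace BoundedAboveSubharmonic

variable {ρ M m : ℝ} {ψ : ℂ → EReal} {z : ℂ}

lemma coe_truncation_add (hψ : BoundedAboveSubharmonic ρ M ψ) (hz : z ∈ Metric.ball 0 ρ) (m : ℝ) :
    ((truncation ρ M ψ m z + M : ℝ) : EReal) = ψ z ⊔ m := by
  have hne_top : ψ z ⊔ m ≠ ⊤ :=
    (max_lt ((hψ.le z hz).trans_lt (EReal.coe_lt_top M)) (EReal.coe_lt_top m)).ne
  have hne_bot : ψ z ⊔ m ≠ ⊥ := ((EReal.bot_lt_coe m).trans_le le_sup_right).ne'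
  rw [truncation, indicator_of_mem hz, sub_add_cancel, EReal.coe_toReal hne_top hne_bot]

lemma truncation_nonpos (hψ : BoundedAboveSubharmonic ρ M ψ) (hm : m ≤ M) (z : ℂ) :
    truncation ρ M ψ m z ≤ 0 := by
  by_cases hz : z ∈ Metric.ball 0 ρ
  · have hle : ((truncation ρ M ψ m z + M : ℝ) : EReal) ≤ M := by
      rw [hψ.coe_truncation_add hz]
      exact sup_le (hψ.le z hz) (EReal.coe_le_coe_iff.2 hm)
    linarith [EReal.coe_le_coe_iff.1 hle]
  · exact (indicator_of_notMem hz _).le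

lemma sub_le_truncation (hψ : BoundedAboveSubharmonic ρ M ψ) (hm : m ≤ M) (z : ℂ) :
    m - M ≤ truncation ρ M ψ m z := by
  by_cases hz : z ∈ Metric.ball 0 ρ
  · have hle : (m : EReal) ≤ (truncation ρ M ψ m z + M : ℝ) := by
      rw [hψ.coe_truncation_add hz]
      exact le_sup_right
    linarith [EReal.coe_le_coe_iff.1 hle]
  · rw [truncation, indicator_of_notMem hz]
    exact sub_nonpos.2 hm

lemma measurable_truncation (hψ : BoundedAboveSubharmonic ρ M ψ) (m : ℝ) :
    Measurable (truncation ρ M ψ m) := by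
  classical
  rw [truncation, ← Set.piecewise_eq_indicator]
  refine measurable_of_restrict_of_restrict_compl (s := Metric.ball 0 ρ) measurableSet_ball ?_ ?_
  · have hψm := (upperSemicontinuousOn_iff_restrict.2 hψ.upperSemicontinuousOn).measurable
    rw [Set.domRestrict_piecewise]
    exact (hψm.max measurable_const).ereal_toReal.sub_const M
  · rw [Set.domRestrict_piecewise_compl]
    exact measurable_const

lemma boundedSupportMeasurable_truncation (hψ : BoundedAboveSubharmonic ρ M ψ) (hm : m ≤ M) :
    BoundedSupportMeasurable (truncation ρ M ψ m) := by
  refine ⟨hψ.measurable_truncation m, ⟨M - m, fun z => ?_⟩, ρ, fun z hz => ?_⟩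
  · rw [abs_of_nonpos (hψ.truncation_nonpos hm z)]
    linarith [hψ.sub_le_truncation hm z]
  · exact indicator_of_notMem (fun h => hz.not_gt (mem_ball_zero_iff.1 h)) _

lemma circleAverage_toReal_sup (hψ : BoundedAboveSubharmonic ρ M ψ) (hm : m ≤ M) {r : ℝ}
    (hr : 0 < r) (hzr : ‖z‖ + r < ρ) :
    Real.circleAverage (fun w => (ψ w ⊔ m).toReal) z r =
      Real.circleAverage (truncation ρ M ψ m) z r + M := by
  have hcircle : CircleIntegrable (truncation ρ M ψ m) z r :=
    (hψ.boundedSupportMeasurable_truncation hm).locallyBoundedMeasurable.circleIntegrable z r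
  calc _ = Real.circleAverage (fun w => truncation ρ M ψ m w + M) z r := by
        refine Real.circleAverage_congr_sphere fun w hw => ?_
        have hw' : w ∈ Metric.ball 0 ρ := by
          rw [mem_sphere_iff_norm, abs_of_pos hr] at hw
          rw [mem_ball_zero_iff]
          linarith [norm_sub_norm_le w z]
        simp only [← hψ.coe_truncation_add hw', EReal.toReal_coe]
    _ = _ := by
        rw [Real.circleAverage_fun_add hcircle (circleIntegrable_const M z r),
          Real.circleAverage_const]

lemma boundedSubharmonic_truncation (hψ : BoundedAboveSubharmonic ρ M ψ) (hm : m ≤ M) :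
    BoundedSubharmonic ρ (truncation ρ M ψ m) := by
  have hbs := hψ.boundedSupportMeasurable_truncation hm
  refine ⟨hbs, hψ.truncation_nonpos hm, fun z r hr hzr => ?_⟩
  have hlower : m - M ≤ Real.circleAverage (truncation ρ M ψ m) z r := by
    have hmono := Real.circleAverage_mono (circleIntegrable_const (m - M) z r)
      (hbs.locallyBoundedMeasurable.circleIntegrable z r) fun w _ => hψ.sub_le_truncation hm w
    rwa [Real.circleAverage_const] at hmono
  rw [← add_le_add_iff_right M, ← EReal.coe_le_coe_iff,
    hψ.coe_truncation_add (mem_ball_zero_iff.2 (by linarith)),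
    ← hψ.circleAverage_toReal_sup hm hr hzr]
  refine sup_le (hψ.le_circleAverage z r hr hzr m) (EReal.coe_le_coe_iff.2 ?_)
  rw [hψ.circleAverage_toReal_sup hm hr hzr]
  linarith

lemma ofReal_exp_neg_truncation_le (hψ : BoundedAboveSubharmonic ρ M ψ)
    (hz : z ∈ Metric.ball 0 ρ) (m : ℝ) :
    ENNReal.ofReal (Real.exp (-truncation ρ M ψ m z)) ≤
      ENNReal.ofReal (Real.exp M) * EReal.exp (-ψ z) := by
  have hshift : -truncation ρ M ψ m z = M + -(truncation ρ M ψ m z + M) := by ring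
  rw [hshift, Real.exp_add, ENNReal.ofReal_mul (Real.exp_nonneg M), ← EReal.exp_coe (-_),
    EReal.coe_neg, hψ.coe_truncation_add hz]
  gcongr
  exact EReal.neg_le_neg_iff.2 le_sup_left

lemma exists_setIntegral_exp_neg_truncation_le (hψ : BoundedAboveSubharmonic ρ M ψ) {k : ℕ}
    (hint : ∫⁻ z in Metric.ball 0 ρ, ENNReal.ofReal (‖z‖ ^ k) * EReal.exp (-ψ z) < ⊤) :
    ∃ I : ℝ, ∀ r ≤ ρ, ∀ m ≤ M,
      ∫ z in Metric.ball 0 r, ‖z‖ ^ k * Real.exp (-truncation ρ M ψ m z) ≤ I := by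
  set J := ∫⁻ z in Metric.ball 0 ρ, ENNReal.ofReal (‖z‖ ^ k) * EReal.exp (-ψ z)
  refine ⟨(ENNReal.ofReal (Real.exp M) * J).toReal, fun r hr m hm => ?_⟩
  have hweighted := (hψ.boundedSubharmonic_truncation hm).integrableOn_norm_pow_mul_exp_neg k r
  have hnonneg (z : ℂ) : 0 ≤ ‖z‖ ^ k * Real.exp (-truncation ρ M ψ m z) := by positivity
  rw [← ENNReal.ofReal_le_iff_le_toReal (ENNReal.mul_ne_top ENNReal.ofReal_ne_top hint.ne),
    ofReal_integral_eq_lintegral_ofReal hweighted (.of_forall hnonneg),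
    ← lintegral_const_mul' _ _ ENNReal.ofReal_ne_top]
  refine (lintegral_mono_set (Metric.ball_subset_ball hr)).trans
    (setLIntegral_mono' measurableSet_ball fun z hz => ?_)
  rw [ENNReal.ofReal_mul (by positivity), mul_left_comm]
  gcongr
  exact hψ.ofReal_exp_neg_truncation_le hz m

lemma limsup_mollification_truncation_le (hψ : BoundedAboveSubharmonic ρ M ψ) {h m : ℕ → ℝ}
    (hh : ∀ n, 0 < h n) (hh₀ : Tendsto h atTop (𝓝 0)) (hm : Tendsto m atTop atBot)
    (hz : z ∈ Metric.ball 0 ρ) :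
    limsup (fun n => ((mollification (h n) (truncation ρ M ψ (m n)) z + M : ℝ) : EReal)) atTop ≤
      ψ z := by
  rw [limsup_le_iff']
  intro y hy
  obtain ⟨t, hψt, hty⟩ := EReal.lt_iff_exists_real_btwn.1 hy
  have hnhds : ∀ᶠ w in 𝓝 z, w ∈ Metric.ball 0 ρ ∧ ψ w < t := by
    have hball := Metric.isOpen_ball.mem_nhds hz
    exact (eventually_mem_set.2 hball).and
      (by simpa [nhdsWithin_eq_nhds.2 hball] using hψ.upperSemicontinuousOn z hz t hψt)
  obtain ⟨δ, hδ, hψδ⟩ := Metric.eventually_nhds_iff.1 hnhds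
  filter_upwards [hm.eventually_le_atBot (min t M), hh₀.eventually_lt_const hδ] with n hmn hhn
  refine (EReal.coe_le_coe_iff.2 (le_sub_iff_add_le.1 ?_)).trans hty.le
  refine mollification_le (hψ.boundedSubharmonic_truncation
    (hmn.trans (min_le_right t M))).toBoundedSupportMeasurable (hh n) fun w hw => ?_
  obtain ⟨hzw, hψw⟩ := @hψδ (z - w) (by simpa using hw.trans hhn)
  rw [le_sub_iff_add_le, ← EReal.coe_le_coe_iff, hψ.coe_truncation_add hzw]
  exact sup_le hψw.le (EReal.coe_le_coe_iff.2 (hmn.trans (min_le_left t M)))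

end BoundedAboveSubharmonic

end Truncation

section Fatou

lemma antitone_mul_exp_neg_mul (c : ℝ≥0∞) {p : ℝ} (hp : 0 ≤ p) :
    Antitone fun y : EReal => c * EReal.exp (-(p * y)) := fun _ _ hxy =>
  mul_le_mul_right (EReal.exp_monotone (EReal.neg_le_neg_iff.2
    (mul_le_mul_of_nonneg_left hxy (EReal.coe_nonneg.2 hp)))) c

lemma continuous_mul_exp_neg_mul {c : ℝ≥0∞} (hc : c ≠ ⊤) (p : ℝ) :
    Continuous fun y : EReal => c * EReal.exp (-(p * y)) := by
  refine (ENNReal.continuous_const_mul hc).comp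
    (ENNReal.continuous_exp.comp (continuous_neg.comp (continuous_iff_continuousAt.2 fun y => ?_)))
  exact EReal.Tendsto.const_mul continuousAt_id (.inl (EReal.coe_ne_bot p))
    (.inl (EReal.coe_ne_top p))

lemma mul_exp_neg_mul_le_liminf {ι : Type*} {l : Filter ι} [l.NeBot] {u : ι → EReal} {y : EReal}
    {c : ℝ≥0∞} (hc : c ≠ ⊤) {p : ℝ} (hp : 0 ≤ p) (hu : limsup u l ≤ y) :
    c * EReal.exp (-(p * y)) ≤ liminf (fun i => c * EReal.exp (-(p * u i))) l :=
  (antitone_mul_exp_neg_mul c hp hu).trans_eq <|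
    (antitone_mul_exp_neg_mul c hp).map_limsup_of_continuousAt u
      (continuous_mul_exp_neg_mul hc p).continuousAt

lemma ofReal_mul_exp_neg_mul_coe_add {a : ℝ} (ha : 0 ≤ a) (p x M : ℝ) :
    ENNReal.ofReal a * EReal.exp (-((p : EReal) * ((x + M : ℝ) : EReal))) =
      ENNReal.ofReal (Real.exp (-(p * M))) * ENNReal.ofReal (a * Real.exp (-(p * x))) := by
  have hsplit : -(p * (x + M)) = -(p * M) + -(p * x) := by ring
  rw [← EReal.coe_mul, ← EReal.coe_neg, EReal.exp_coe, hsplit, Real.exp_add,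
    ENNReal.ofReal_mul (Real.exp_nonneg _), ENNReal.ofReal_mul ha, mul_left_comm]

variable {ρ M p : ℝ} {ψ : ℂ → EReal} {h m : ℕ → ℝ}

lemma BoundedAboveSubharmonic.setLIntegral_le_of_frequently (hψ : BoundedAboveSubharmonic ρ M ψ)
    (hh : ∀ n, 0 < h n) (hh₀ : Tendsto h atTop (𝓝 0)) (hm : ∀ n, m n ≤ M)
    (hm₀ : Tendsto m atTop atBot) (hp : 0 ≤ p) (k : ℕ) {A : Set ℂ} (hA : MeasurableSet A)
    (hsub : A ⊆ Metric.ball 0 ρ) {C : ℝ≥0∞}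
    (hC : ∃ᶠ n in atTop, ∫⁻ z in A, ENNReal.ofReal (‖z‖ ^ k *
      Real.exp (-(p * mollification (h n) (truncation ρ M ψ (m n)) z))) ≤ C) :
    ∫⁻ z in A, ENNReal.ofReal (‖z‖ ^ k) * EReal.exp (-(p * ψ z)) ≤
      ENNReal.ofReal (Real.exp (-(p * M))) * C := by
  set U := fun n => mollification (h n) (truncation ρ M ψ (m n))
  have hU (n : ℕ) : Measurable (U n) :=
    ((hψ.boundedSupportMeasurable_truncation (hm n)).mollification (hh n).le).measurable
  calc _ ≤ ∫⁻ z in A, liminf (fun n => ENNReal.ofReal (Real.exp (-(p * M))) *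
          ENNReal.ofReal (‖z‖ ^ k * Real.exp (-(p * U n z)))) atTop := by
        refine setLIntegral_mono' hA fun z hz => ?_
        simp only [← ofReal_mul_exp_neg_mul_coe_add (pow_nonneg (norm_nonneg z) k)]
        exact mul_exp_neg_mul_le_liminf ENNReal.ofReal_ne_top hp
          (hψ.limsup_mollification_truncation_le hh hh₀ hm₀ (hsub hz))
    _ ≤ liminf (fun n => ∫⁻ z in A, ENNReal.ofReal (Real.exp (-(p * M))) *
          ENNReal.ofReal (‖z‖ ^ k * Real.exp (-(p * U n z)))) atTop :=
        lintegral_liminf_le fun n => by have := hU n; fun_prop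
    _ ≤ _ := by
        refine liminf_le_of_frequently_le' (hC.mono fun n hn => ?_)
        rw [lintegral_const_mul' _ _ ENNReal.ofReal_ne_top]
        gcongr

lemma BoundedAboveSubharmonic.exists_setLIntegral_lt_top (hψ : BoundedAboveSubharmonic ρ M ψ)
    (hρ : 0 < ρ) (hρ' : ρ ≤ 1) {k : ℕ}
    (hint : ∫⁻ z in Metric.ball 0 ρ, ENNReal.ofReal (‖z‖ ^ (2 * k)) * EReal.exp (-ψ z) < ⊤) :
    ∃ r > 0, ∃ p : ℝ, 1 < p ∧
      ∫⁻ z in Metric.ball 0 r, ENNReal.ofReal (‖z‖ ^ (2 * k)) * EReal.exp (-(p * ψ z)) < ⊤ := by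
  set h : ℕ → ℝ := fun n => ρ / 2 / (n + 1 : ℕ)
  set m : ℕ → ℝ := fun n => M - n
  have hh (n : ℕ) : 0 < h n := by positivity
  have hhρ (n : ℕ) : ρ / 2 + h n ≤ ρ := by
    have : h n ≤ ρ / 2 := div_le_self (by positivity) (Nat.one_le_cast.2 n.succ_pos)
    linarith
  have hh₀ : Tendsto h atTop (𝓝 0) :=
    (tendsto_const_div_atTop_nhds_zero_nat (ρ / 2)).comp (tendsto_add_atTop_nat 1)
  have hm (n : ℕ) : m n ≤ M := sub_le_self M n.cast_nonneg
  have hm₀ : Tendsto m atTop atBot :=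
    tendsto_atBot_add_const_left _ M (tendsto_neg_atTop_atBot.comp tendsto_natCast_atTop_atTop)
  obtain ⟨I, hI⟩ := hψ.exists_setIntegral_exp_neg_truncation_le hint
  obtain ⟨r, hr, hrρ, p, hp, C, hC, hbound⟩ := exists_frequently_setLIntegral_annulus_le
    (fun n => hψ.boundedSubharmonic_truncation (hm n)) hh hhρ (by positivity) (by linarith)
    fun n => hI (ρ / 2) (by linarith) (m n) (hm n)
  refine ⟨r / 2, by positivity, p, hp, lt_of_le_of_lt ?_ (ENNReal.mul_lt_top
    (ENNReal.ofReal_lt_top (r := Real.exp (-(p * M)))) hC)⟩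
  rw [setLIntegral_ball_eq_iSup_annulus (by positivity)]
  refine iSup_le fun n => ?_
  have hs := hbound (r / 2 / (n + 2) / 2) (by positivity) (by
    rw [div_div, div_div]
    exact div_le_self hr.le (by linarith [(n.cast_nonneg : (0 : ℝ) ≤ n)]))
  rw [mul_div_cancel₀ _ two_ne_zero] at hs
  exact hψ.setLIntegral_le_of_frequently hh hh₀ hm hm₀ (by linarith) (2 * k)
    (measurableSet_annulus _ _)
    ((annulus_subset_ball _ _).trans (Metric.ball_subset_ball (by linarith))) hs

end Fatou

section MultiplierIdeal

open Asymptotics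

/-- `F` belongs to the stalk at `z₀` of the multiplier ideal sheaf of `φ`: the function
`|F|² e^{-φ}` is integrable near `z₀`. -/
def MemMultiplierIdeal (φ : ℂ → EReal) (F : ℂ → ℂ) (z₀ : ℂ) : Prop :=
  ∃ U ∈ 𝓝 z₀, ∫⁻ z in U, ENNReal.ofReal (‖F z‖ ^ 2) * EReal.exp (-φ z) < ⊤

variable {φ : ℂ → EReal} {F G : ℂ → ℂ} {z₀ : ℂ}

lemma setLIntegral_ball_zero_comp_add (f : ℂ → ℝ≥0∞) (z₀ : ℂ) (r : ℝ) :
    ∫⁻ z in Metric.ball 0 r, f (z₀ + z) = ∫⁻ z in Metric.ball z₀ r, f z := by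
  have hball : (z₀ + ·) ⁻¹' Metric.ball z₀ r = Metric.ball 0 r := by
    ext z
    simp
  rw [← (measurePreserving_add_left volume z₀).setLIntegral_comp_preimage_emb
    (measurableEmbedding_addLeft z₀) f, hball]

lemma memMultiplierIdeal_iff_eventually :
    MemMultiplierIdeal φ F z₀ ↔ ∀ᶠ r in 𝓝[>] (0 : ℝ),
      ∫⁻ z in Metric.ball 0 r,
        ENNReal.ofReal (‖F (z₀ + z)‖ ^ 2) * EReal.exp (-φ (z₀ + z)) < ⊤ := by
  simp only [setLIntegral_ball_zero_comp_add
    (fun z => ENNReal.ofReal (‖F z‖ ^ 2) * EReal.exp (-φ z)) z₀]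
  constructor
  · rintro ⟨U, hU, hint⟩
    obtain ⟨ε, hε, hεU⟩ := Metric.mem_nhds_iff.1 hU
    filter_upwards [Ioo_mem_nhdsGT hε] with r hr
    exact (lintegral_mono_set ((Metric.ball_subset_ball hr.2.le).trans hεU)).trans_lt hint
  · intro h
    obtain ⟨r, hr, hr0⟩ := (h.and self_mem_nhdsWithin).exists
    exact ⟨_, Metric.ball_mem_nhds z₀ hr0, hr⟩

lemma MemMultiplierIdeal.of_isBigO (hF : MemMultiplierIdeal φ F z₀) (hGF : G =O[𝓝 z₀] F) :
    MemMultiplierIdeal φ G z₀ := by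
  obtain ⟨U, hU, hint⟩ := hF
  obtain ⟨c, hc⟩ := hGF.bound
  obtain ⟨V, hV, hVopen, hzV⟩ := mem_nhds_iff.1 (Filter.inter_mem hU hc)
  refine ⟨V, hVopen.mem_nhds hzV, ?_⟩
  calc ∫⁻ z in V, ENNReal.ofReal (‖G z‖ ^ 2) * EReal.exp (-φ z)
      ≤ ∫⁻ z in V, ENNReal.ofReal (c ^ 2) * (ENNReal.ofReal (‖F z‖ ^ 2) * EReal.exp (-φ z)) := by
        refine setLIntegral_mono' hVopen.measurableSet fun z hz => ?_
        rw [← mul_assoc, ← ENNReal.ofReal_mul (sq_nonneg c), ← mul_pow]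
        gcongr
        exact (hV hz).2
    _ ≤ ENNReal.ofReal (c ^ 2) * ∫⁻ z in U, ENNReal.ofReal (‖F z‖ ^ 2) * EReal.exp (-φ z) := by
        rw [lintegral_const_mul' _ _ ENNReal.ofReal_ne_top]
        gcongr
        exact hV.trans Set.inter_subset_left
    _ < ⊤ := ENNReal.mul_lt_top ENNReal.ofReal_lt_top hint

lemma exists_isTheta_sub_pow (hF : AnalyticAt ℂ F z₀) (hF₀ : ¬ ∀ᶠ z in 𝓝 z₀, F z = 0) :
    ∃ k : ℕ, F =Θ[𝓝 z₀] fun z => (z - z₀) ^ k := by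
  obtain ⟨k, g, hg, hg₀, hFg⟩ := hF.exists_eventuallyEq_pow_smul_nonzero_iff.2 hF₀
  have hg_one : g =Θ[𝓝 z₀] fun _ => (1 : ℂ) :=
    ((isEquivalent_const_iff_tendsto hg₀).2 hg.continuousAt.tendsto).isTheta.trans
      (isTheta_const_const hg₀ one_ne_zero)
  have hpow := (isTheta_refl (fun z => (z - z₀) ^ k) (𝓝 z₀)).smul hg_one
  exact ⟨k, EventuallyEq.trans_isTheta hFg (by simpa using hpow)⟩

lemma eventually_boundedAboveSubharmonic {D : Set ℂ} (hD : IsOpen D)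
    (hφ : SubharmonicOn φ D) (hz₀ : z₀ ∈ D) :
    ∃ M : ℝ, ∀ᶠ ρ in 𝓝[>] (0 : ℝ), BoundedAboveSubharmonic ρ M fun z => φ (z₀ + z) := by
  obtain ⟨husc, htop, -, hmean⟩ := hφ
  obtain ⟨M, hM, -⟩ := EReal.lt_iff_exists_real_btwn.1 (htop z₀ hz₀).lt_top
  have hnhds : ∀ᶠ z in 𝓝 z₀, z ∈ D ∧ φ z < M := by
    refine (eventually_mem_set.2 (hD.mem_nhds hz₀)).and ?_
    simpa [nhdsWithin_eq_nhds.2 (hD.mem_nhds hz₀)] using husc z₀ hz₀ M hM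
  obtain ⟨ε, hε, hball⟩ := Metric.eventually_nhds_iff.1 hnhds
  refine ⟨M, ?_⟩
  filter_upwards [Ioo_mem_nhdsGT hε] with ρ hρ
  have hadd {z : ℂ} (hz : ‖z‖ < ρ) : z₀ + z ∈ D ∧ φ (z₀ + z) < M :=
    hball (by simpa using hz.trans hρ.2)
  refine ⟨?_, fun z hz => (hadd (mem_ball_zero_iff.1 hz)).2.le, fun z r hr hzr m => ?_⟩
  · exact husc.comp (continuous_const.add continuous_id).continuousOn
      fun z hz => (hadd (mem_ball_zero_iff.1 hz)).1
  · have hdisc (t : ℂ) (ht : ‖t‖ ≤ r) : z₀ + z + t ∈ D := by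
      rw [add_assoc]
      exact (hadd (by linarith [norm_add_le z t])).1
    have hle := hmean (z₀ + z) (by simpa using hdisc 0 (by simpa using hr.le)) r hr hdisc m
    simpa [Real.circleAverage_def, circleMap, add_assoc] using hle

end MultiplierIdeal

end StrongOpenness

theorem stmt_1_general {φ : ℂ → EReal} {D : Set ℂ} (hD : IsOpen D) (hsub : SubharmonicOn φ D)
    {z₀ : ℂ} (hz₀ : z₀ ∈ D) {F : ℂ → ℂ} (hF : AnalyticAt ℂ F z₀)
    (hint : StrongOpenness.MemMultiplierIdeal φ F z₀) :
    ∃ p : ℝ, 1 < p ∧ StrongOpenness.MemMultiplierIdeal (fun z => (p : EReal) * φ z) F z₀ := by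
  by_cases hF₀ : ∀ᶠ z in 𝓝 z₀, F z = 0
  · have hzero : StrongOpenness.MemMultiplierIdeal (fun z => ((2 : ℝ) : EReal) * φ z) 0 z₀ :=
      ⟨univ, univ_mem, by simp⟩
    exact ⟨2, one_lt_two, hzero.of_isBigO (EventuallyEq.isBigO hF₀)⟩
  obtain ⟨k, hk⟩ := StrongOpenness.exists_isTheta_sub_pow hF hF₀
  obtain ⟨M, hM⟩ := StrongOpenness.eventually_boundedAboveSubharmonic hD hsub hz₀
  have hmonomial := StrongOpenness.memMultiplierIdeal_iff_eventually.1 (hint.of_isBigO hk.2)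
  obtain ⟨ρ, ⟨hψ, hρint⟩, hρ⟩ := ((hM.and hmonomial).and (Ioo_mem_nhdsGT one_pos)).exists
  obtain ⟨r, hr, p, hp, hrp⟩ := hψ.exists_setLIntegral_lt_top hρ.1 hρ.2.le (k := k)
    (by simpa [pow_mul'] using hρint)
  refine ⟨p, hp, StrongOpenness.MemMultiplierIdeal.of_isBigO
    ⟨Metric.ball z₀ r, Metric.ball_mem_nhds z₀ hr, ?_⟩ hk.1⟩
  rw [← StrongOpenness.setLIntegral_ball_zero_comp_add]
  simpa [pow_mul'] using hrp

/-- Strong openness for `n = 1`: if `φ` is a negative subharmonic function on the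
unit disc `Δ` and `F` is holomorphic on `Δ` with `∫_Δ |F|² e^{−φ} dλ₁ < ∞`, then
there exist `r ∈ (0,1)` and `p > 1` with `∫_{Δ_r} |F|² e^{−pφ} dλ₁ < ∞`. -/
theorem stmt_1 (φ : ℂ → EReal)
    (hsub : SubharmonicOn φ (Metric.ball 0 1))
    (hneg : ∀ z ∈ Metric.ball (0 : ℂ) 1, φ z < 0)
    (F : ℂ → ℂ) (hF : DifferentiableOn ℂ F (Metric.ball 0 1))
    (hint : ∫⁻ z in Metric.ball (0 : ℂ) 1,
        ENNReal.ofReal (‖F z‖ ^ 2) * EReal.exp (-(φ z)) < ⊤) :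
    ∃ r ∈ Set.Ioo (0 : ℝ) 1, ∃ p : ℝ, 1 < p ∧
      ∫⁻ z in Metric.ball (0 : ℂ) r,
        ENNReal.ofReal (‖F z‖ ^ 2) * EReal.exp (-((p : EReal) * φ z)) < ⊤ := by
  obtain ⟨p, hp, hmem⟩ := stmt_1_general Metric.isOpen_ball hsub (Metric.mem_ball_self one_pos)
    (hF.analyticAt (Metric.ball_mem_nhds 0 one_pos)) ⟨_, Metric.ball_mem_nhds 0 one_pos, hint⟩
  obtain ⟨r, hr, hr₁⟩ := ((StrongOpenness.memMultiplierIdeal_iff_eventually.1 hmem).and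
    (Ioo_mem_nhdsGT one_pos)).exists
  exact ⟨r, hr₁, p, hp, by simpa using hr⟩
end

section
/- One has liminf_{A → +∞} λ_n({x ∈ Ω : G(x) > A}) · u(A) = 0; that is, there exists a sequence A_j → +∞ with A_j > e such that λ_n({G > A_j}) / t_{A_j} → 0 as j → ∞. -/
open MeasureTheory Set Filter

/-- For `A > e`, `tA A` is the unique `y ∈ (0, e⁻¹)` with `y · (−log y) = 1/A`
(the set below is then a singleton, so its infimum is that unique element);
`u(A) := 1 / tA A`. -/
noncomputable def tA (A : ℝ) : ℝ :=
  sInf {y : ℝ | y ∈ Set.Ioo 0 (Real.exp (-1)) ∧ y * (-Real.log y) = 1 / A}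

/-!
By the layer cake formula the distribution function `m(A) = μ {f > A}` of an integrable `f` is
integrable on `(0, ∞)`, whereas `1 / (A log A)`, the derivative of `log log A`, is not integrable
at infinity. Since `y (-log y) ≤ √y`, the equation `y (-log y) = 1 / A` forces
`y ≥ 1 / (2 A log A)`, so `t_A` dominates `1 / (A log A)` up to a constant. Hence `t_A` cannot be
`O(m(A))`, which says that `0` is a cluster value of `m(A) / t_A` as `A → ∞`.
-/

open Topology Asymptotics Real

section Filter

variable {α : Type*} {l : Filter α}

lemma exists_seq_tendsto_of_mapClusterPt [l.IsCountablyGenerated] {X : Type*} [TopologicalSpace X]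
    [FirstCountableTopology X] {f : α → X} {x : X} {p : α → Prop} (hf : MapClusterPt x l f)
    (hp : ∀ᶠ a in l, p a) :
    ∃ s : ℕ → α, (∀ j, p (s j)) ∧ Tendsto s atTop l ∧ Tendsto (fun j => f (s j)) atTop (𝓝 x) := by
  have : (comap f (𝓝 x) ⊓ l).NeBot := neBot_inf_comap_iff_map'.mpr hf
  obtain ⟨s, hs, hps⟩ := exists_seq_forall_of_frequently (l := comap f (𝓝 x) ⊓ l)
    (hp.filter_mono inf_le_right).frequently
  exact ⟨s, hps, hs.mono_right inf_le_right, tendsto_comap_iff.mp (hs.mono_right inf_le_left)⟩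

lemma mapClusterPt_zero_div_of_not_isBigO {𝕜 : Type*} [NormedField 𝕜] {f g : α → 𝕜}
    (h : ¬ g =O[l] f) : MapClusterPt 0 l (fun a => f a / g a) := by
  refine Metric.nhds_basis_ball.mapClusterPt_iff_frequently.mpr fun ε hε => ?_
  have hlt : ∃ᶠ a in l, ε⁻¹ * ‖f a‖ < ‖g a‖ := by
    simpa only [not_eventually, not_le] using mt (IsBigO.of_bound ε⁻¹) h
  refine hlt.mono fun a ha => ?_
  have hg : 0 < ‖g a‖ := (by positivity : 0 ≤ ε⁻¹ * ‖f a‖).trans_lt ha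
  rwa [mem_ball_zero_iff, norm_div, div_lt_iff₀ hg, ← inv_mul_lt_iff₀ hε]

end Filter

lemma integrableOn_Ioi_measureReal_lt {X : Type*} [MeasurableSpace X] {μ : Measure X}
    {f : X → ℝ} (hf : Integrable f μ) : IntegrableOn (fun t => μ.real {x | t < f x}) (Ioi 0) := by
  have hanti : Antitone fun t => μ {x | t < f x} :=
    fun s t hst => measure_mono fun x (hx : t < f x) => hst.trans_lt hx
  refine integrable_toReal_of_lintegral_ne_top hanti.measurable.aemeasurable (ne_of_lt ?_)
  calc ∫⁻ t in Ioi 0, μ {x | t < f x}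
    _ = ∫⁻ t in Ioi 0, μ {x | t < max (f x) 0} :=
        setLIntegral_congr_fun measurableSet_Ioi fun t (ht : 0 < t) => by
          simp only [lt_max_iff, ht.not_gt, or_false]
    _ = ∫⁻ x, ENNReal.ofReal (max (f x) 0) ∂μ :=
        (lintegral_eq_lintegral_meas_lt μ (.of_forall fun _ => le_max_right _ _)
          hf.pos_part.aemeasurable).symm
    _ < ⊤ := hf.pos_part.lintegral_lt_top

lemma not_isBigO_inv_div_log_of_integrableOn {E : Type*} [NormedAddCommGroup E] {g : ℝ → E}
    {s : Set ℝ} (hs : s ∈ atTop) (hg : IntegrableOn g s) :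
    ¬ (fun t => t⁻¹ / log t) =O[atTop] g := by
  intro hO
  refine not_integrableOn_of_tendsto_norm_atTop_of_deriv_isBigO_filter atTop hs ?_
    (tendsto_norm_atTop_atTop.comp (tendsto_log_atTop.comp tendsto_log_atTop)) ?_ hg
  · filter_upwards [eventually_gt_atTop 1] with t ht
    exact differentiableOn_log_log.differentiableAt (Ioi_mem_nhds ht)
  · exact deriv_log_log ▸ hO

lemma negMulLog_le_sqrt {y : ℝ} (hy : 0 ≤ y) : negMulLog y ≤ √y := by
  rcases hy.eq_or_lt with rfl | hy
  · simp
  have hsqrt : 0 < √y := sqrt_pos.mpr hy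
  calc negMulLog y = y * (2 * -log √y) := by rw [negMulLog, log_sqrt hy.le]; ring
    _ ≤ y * exp (-log √y) := mul_le_mul_of_nonneg_left two_mul_le_exp hy.le
    _ = √y := by rw [exp_neg, exp_log hsqrt, ← div_eq_mul_inv, div_sqrt]

lemma Ioo_subset_negMulLog_image_Ioo :
    Ioo 0 (exp (-1)) ⊆ negMulLog '' Ioo 0 (exp (-1)) := by
  simpa [negMulLog] using
    intermediate_value_Ioo (exp_pos (-1)).le continuous_negMulLog.continuousOn

lemma inv_div_two_mul_log_le_of_negMulLog_eq_inv {A y : ℝ} (hA : 1 < A) (hy : 0 < y)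
    (h : negMulLog y = A⁻¹) : A⁻¹ / (2 * log A) ≤ y := by
  have hlogA : 0 < log A := log_pos hA
  have hlog : -log A ≤ log y / 2 := by
    rw [← log_inv, ← log_sqrt hy.le]
    exact log_le_log (by positivity) (h ▸ negMulLog_le_sqrt hy.le)
  calc A⁻¹ / (2 * log A) = y * -log y / (2 * log A) := by rw [← h, negMulLog, neg_mul_comm]
    _ ≤ y * (2 * log A) / (2 * log A) := by gcongr; linarith
    _ = y := mul_div_cancel_right₀ y (by positivity)

lemma inv_div_two_mul_log_le_tA {A : ℝ} (hA : exp 1 < A) : A⁻¹ / (2 * log A) ≤ tA A := by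
  have hA1 : 1 < A := (one_lt_exp_iff.mpr one_pos).trans hA
  have hA0 : 0 < A := one_pos.trans hA1
  refine le_csInf ?_ fun y ⟨⟨hy, _⟩, heq⟩ =>
    inv_div_two_mul_log_le_of_negMulLog_eq_inv hA1 hy ?_
  · have hinv : A⁻¹ < exp (-1) := exp_neg 1 ▸ inv_strictAnti₀ (exp_pos 1) hA
    obtain ⟨y, hy, heq⟩ := Ioo_subset_negMulLog_image_Ioo ⟨inv_pos.mpr hA0, hinv⟩
    exact ⟨y, hy, by rw [one_div, ← heq, negMulLog, neg_mul_comm]⟩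
  · rw [negMulLog, neg_mul_comm, heq, one_div]

lemma inv_div_log_isBigO_tA : (fun A => A⁻¹ / log A) =O[atTop] tA := by
  refine IsBigO.of_bound 2 ?_
  filter_upwards [eventually_gt_atTop (exp 1)] with A hA
  have hA1 : 1 < A := (one_lt_exp_iff.mpr one_pos).trans hA
  have hpos : 0 < A⁻¹ / log A := div_pos (inv_pos.mpr (one_pos.trans hA1)) (log_pos hA1)
  calc ‖A⁻¹ / log A‖ = 2 * (A⁻¹ / (2 * log A)) := by rw [norm_of_nonneg hpos.le]; ring
    _ ≤ 2 * ‖tA A‖ := by grw [inv_div_two_mul_log_le_tA hA, ← le_norm_self]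

theorem stmt_10_general {X : Type*} [MeasurableSpace X] {μ : Measure X} {f : X → ℝ}
    (hf : Integrable f μ) :
    ∃ A : ℕ → ℝ, (∀ j, exp 1 < A j) ∧ Tendsto A atTop atTop ∧
      Tendsto (fun j => μ.real {x | A j < f x} / tA (A j)) atTop (𝓝 0) := by
  have hnot : ¬ tA =O[atTop] fun A => μ.real {x | A < f x} := fun h =>
    not_isBigO_inv_div_log_of_integrableOn (Ioi_mem_atTop 0)
      (integrableOn_Ioi_measureReal_lt hf) (inv_div_log_isBigO_tA.trans h)
  exact exists_seq_tendsto_of_mapClusterPt (mapClusterPt_zero_div_of_not_isBigO hnot)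
    (eventually_gt_atTop (exp 1))

/-- `liminf_{A → ∞} λₙ({G > A}) · u(A) = 0`: there is a sequence `A_j → ∞`,
`A_j > e`, with `λₙ({G > A_j}) / t_{A_j} → 0`. -/
theorem stmt_10 {n : ℕ} (Ω : Set (Fin n → ℂ)) (hΩopen : IsOpen Ω) (hΩconn : IsConnected Ω)
    (hΩbdd : Bornology.IsBounded Ω) (hΩpos : 0 < volume Ω)
    (G : (Fin n → ℂ) → ℝ) (hGmeas : Measurable G) (hGpos : ∀ x ∈ Ω, 0 < G x)
    (hGint : IntegrableOn G Ω volume) :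
    ∃ A : ℕ → ℝ, (∀ j, Real.exp 1 < A j) ∧ Tendsto A atTop atTop ∧
      Tendsto (fun j => (volume {x | x ∈ Ω ∧ A j < G x}).toReal / tA (A j))
        atTop (nhds 0) := by
  simpa only [measureReal_def, Measure.restrict_apply' hΩopen.measurableSet,
    ofPred_inter_eq_sep] using stmt_10_general hGint
end

section
/- Let t_j ∈ (0, e^{−1}) be a sequence with t_j → 0 and let x_j > e be a sequence of reals such that x_j · t_j · (−log t_j) → 0 as j → ∞. Then u(x_j) = o(t_j^{−1}), i.e., t_j · u(x_j) = t_j / t_{x_j} → 0 as j → ∞. -/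
/-!
Write `f y = y * (-log y)`, which is strictly increasing on `[0, e⁻¹]`. Since `f y / y = -log y`
is decreasing, `0 < t ≤ s < 1` gives `t / s ≤ f t / f s`. For `s = tA A` we have `f s = 1 / A`, so
the right-hand side is `A * f t`; once it is at most `1`, monotonicity of `f` yields `t ≤ s`.
-/

open MeasureTheory Set Filter

section

open Real

lemma strictMonoOn_negMulLog : StrictMonoOn negMulLog (Icc 0 (exp (-1))) := by
  simpa only [negMulLog_eq_neg] using mul_log_strictAntiOn.neg

lemma bijOn_negMulLog : BijOn negMulLog (Ioo 0 (exp (-1))) (Ioo 0 (exp (-1))) := by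
  have image_eq : negMulLog '' Ioo 0 (exp (-1)) = Ioo 0 (exp (-1)) := by
    simpa [negMulLog] using continuous_negMulLog.continuousOn.image_Ioo_of_strictMonoOn
      (exp_pos (-1)).le strictMonoOn_negMulLog
  simpa only [image_eq] using (strictMonoOn_negMulLog.injOn.mono Ioo_subset_Icc_self).bijOn_image

lemma div_le_negMulLog_div_negMulLog {s t : ℝ} (ht : 0 < t) (hts : t ≤ s) (hs : s < 1) :
    t / s ≤ negMulLog t / negMulLog s := by
  have hs_pos : 0 < s := ht.trans_le hts
  have hlog_s : 0 < -log s := neg_pos.mpr (log_neg hs_pos hs)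
  have hlog : -log s ≤ -log t := neg_le_neg (log_le_log ht hts)
  calc t / s = t * -log s / (s * -log s) := (mul_div_mul_right t s hlog_s.ne').symm
    _ ≤ t * -log t / (s * -log s) := by gcongr
    _ = negMulLog t / negMulLog s := by simp only [negMulLog, neg_mul, mul_neg]

lemma tendsto_div_of_tendsto_negMulLog_div {ι : Type*} {l : Filter ι} {s t : ι → ℝ}
    (hs : ∀ᶠ i in l, s i ∈ Ioo 0 (exp (-1))) (ht : ∀ᶠ i in l, t i ∈ Ioo 0 (exp (-1)))
    (h : Tendsto (fun i ↦ negMulLog (t i) / negMulLog (s i)) l (nhds 0)) :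
    Tendsto (fun i ↦ t i / s i) l (nhds 0) := by
  refine squeeze_zero' ?_ ?_ h
  · filter_upwards [hs, ht] with i hsi hti using div_nonneg hti.1.le hsi.1.le
  · filter_upwards [hs, ht, h.eventually_le_const one_pos] with i hsi hti hratio
    have hle : t i ≤ s i := by
      rwa [div_le_one (bijOn_negMulLog.mapsTo hsi).1, strictMonoOn_negMulLog.le_iff_le
        (Ioo_subset_Icc_self hti) (Ioo_subset_Icc_self hsi)] at hratio
    have hs_lt_one : s i < 1 := hsi.2.trans (exp_lt_one_iff.mpr neg_one_lt_zero)
    exact div_le_negMulLog_div_negMulLog hti.1 hle hs_lt_one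

lemma tA_eq_of_negMulLog_eq {A y : ℝ} (hy : y ∈ Ioo 0 (exp (-1))) (hyA : negMulLog y = 1 / A) :
    tA A = y := by
  have solutions_eq : {z | z ∈ Ioo 0 (exp (-1)) ∧ z * (-log z) = 1 / A} = {y} := by
    simp only [mul_neg, ← neg_mul, ← negMulLog.eq_def, ← hyA]
    ext z
    refine ⟨fun hz ↦ bijOn_negMulLog.injOn hz.1 hy hz.2, ?_⟩
    rintro rfl
    exact ⟨hy, rfl⟩
  rw [tA, solutions_eq, csInf_singleton]

lemma exists_negMulLog_eq_one_div {A : ℝ} (hA : exp 1 < A) :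
    ∃ y ∈ Ioo 0 (exp (-1)), negMulLog y = 1 / A := by
  apply bijOn_negMulLog.surjOn
  rw [exp_neg, ← one_div]
  exact ⟨one_div_pos.mpr ((exp_pos 1).trans hA), one_div_lt_one_div_of_lt (exp_pos 1) hA⟩

lemma tA_mem_Ioo {A : ℝ} (hA : exp 1 < A) : tA A ∈ Ioo 0 (exp (-1)) := by
  obtain ⟨y, hy, hyA⟩ := exists_negMulLog_eq_one_div hA
  rwa [tA_eq_of_negMulLog_eq hy hyA]

lemma negMulLog_tA {A : ℝ} (hA : exp 1 < A) : negMulLog (tA A) = 1 / A := by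
  obtain ⟨y, hy, hyA⟩ := exists_negMulLog_eq_one_div hA
  rwa [tA_eq_of_negMulLog_eq hy hyA]

theorem stmt_12_general {ι : Type*} {l : Filter ι} {t x : ι → ℝ}
    (ht : ∀ᶠ i in l, t i ∈ Ioo 0 (exp (-1))) (hx : ∀ᶠ i in l, exp 1 < x i)
    (hxt : Tendsto (fun i ↦ x i * t i * (-log (t i))) l (nhds 0)) :
    Tendsto (fun i ↦ t i / tA (x i)) l (nhds 0) := by
  refine tendsto_div_of_tendsto_negMulLog_div (hx.mono fun _ ↦ tA_mem_Ioo) ht (hxt.congr' ?_)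
  filter_upwards [hx] with i hxi
  rw [negMulLog_tA hxi, negMulLog, div_div_eq_mul_div, div_one]
  ring

end

/-- If `t_j ∈ (0, e⁻¹)`, `t_j → 0`, `x_j > e` and `x_j · t_j · (−log t_j) → 0`,
then `u(x_j) = o(t_j⁻¹)`, i.e. `t_j · u(x_j) = t_j / t_{x_j} → 0`. -/
theorem stmt_12 (t x : ℕ → ℝ)
    (ht : ∀ j, t j ∈ Set.Ioo 0 (Real.exp (-1)))
    (ht0 : Tendsto t atTop (nhds 0))
    (hx : ∀ j, Real.exp 1 < x j)
    (hxt : Tendsto (fun j => x j * t j * (-Real.log (t j))) atTop (nhds 0)) :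
    Tendsto (fun j => t j / tA (x j)) atTop (nhds 0) :=
  stmt_12_general (.of_forall ht) (.of_forall hx) hxt
end

section
/- Let r > 0, let i₁ ≥ 1 be an integer, and let h be a holomorphic function on Δ_r with h not identically zero. Then there exist constants C₂ > 0 and δ ∈ (0, r) such that: for every a ∈ ℂ with 0 < |a| < δ and |a| < r^{i₁}, and every holomorphic function f on Δ_r satisfying f(0) = 0 and f(b) = 1 for every b ∈ ℂ with b^{i₁} = a, one has i₁² ∫_{Δ_r} |f(t)|² |h(t)|² |t|^{2(i₁−1)} dλ₁(t) > C₂ |a|^{−2}. The constants C₂ and δ depend only on h, r and i₁, not on a or f. -/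
open MeasureTheory Set Filter ENNReal

/-!
On a circle of radius `R` with `‖a‖ < R ^ n`, the Cauchy formula shows that the circle average of
`a / (z ^ n - a) * f z` is the mean of `f` over the `n`-th roots of `a`, minus `f 0`. The kernel is
`O(‖a‖)`, so Jensen's inequality bounds the circle average of `‖f‖ ^ 2` below by a multiple of
`‖mean - f 0‖ ^ 2 / ‖a‖ ^ 2`. It remains to integrate over the radii of an annulus around `0` on
which the weight is bounded below.
-/

section CircleAverage

open Metric Real

variable {E : Type*} [NormedAddCommGroup E]

theorem circleIntegrable_multiset_sum {ι : Type*} {m : Multiset ι} {f : ι → ℂ → E} {c : ℂ} {R : ℝ}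
    (hf : ∀ i ∈ m, CircleIntegrable (f i) c R) :
    CircleIntegrable (fun z ↦ (m.map (f · z)).sum) c R := by
  induction m using Multiset.induction_on with
  | empty => simpa only [Multiset.map_zero, Multiset.sum_zero] using circleIntegrable_const 0 c R
  | cons i m ih =>
    rw [Multiset.forall_mem_cons] at hf
    simp only [Multiset.map_cons, Multiset.sum_cons]
    exact hf.1.add (ih hf.2)

theorem circleAverage_multiset_sum [NormedSpace ℝ E] {ι : Type*} {m : Multiset ι}
    {f : ι → ℂ → E} {c : ℂ} {R : ℝ} (hf : ∀ i ∈ m, CircleIntegrable (f i) c R) :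
    circleAverage (fun z ↦ (m.map (f · z)).sum) c R =
      (m.map fun i ↦ circleAverage (f i) c R).sum := by
  induction m using Multiset.induction_on with
  | empty => simp [circleAverage]
  | cons i m ih =>
    rw [Multiset.forall_mem_cons] at hf
    simp only [Multiset.map_cons, Multiset.sum_cons]
    rw [circleAverage_fun_add hf.1 (circleIntegrable_multiset_sum hf.2), ih hf.2]

theorem map_circleAverage_le_of_convexOn [NormedSpace ℝ E] [CompleteSpace E] {g : E → ℝ} {s : Set E}
    {f : ℂ → E} {c : ℂ} {R : ℝ} (hg : ConvexOn ℝ s g) (hgc : ContinuousOn g s) (hs : IsClosed s)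
    (hfs : MapsTo f (sphere c |R|) s) (hf : CircleIntegrable f c R)
    (hgf : CircleIntegrable (g ∘ f) c R) :
    g (circleAverage f c R) ≤ circleAverage (g ∘ f) c R := by
  rw [circleAverage_eq_intervalAverage, circleAverage_eq_intervalAverage]
  refine hg.map_set_average_le hgc hs ?_ ?_ (ae_of_all _ fun θ ↦ hfs (circleMap_mem_sphere' c R θ))
    hf.def' hgf.def'
  · rw [uIoc_of_le two_pi_pos.le, Real.volume_Ioc]
    simp [pi_pos]
  · rw [uIoc_of_le two_pi_pos.le, Real.volume_Ioc]
    exact ofReal_ne_top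

theorem sq_norm_circleAverage_le [NormedSpace ℝ E] [CompleteSpace E] {f : ℂ → E} {c : ℂ} {R : ℝ}
    (hf : ContinuousOn f (sphere c |R|)) :
    ‖circleAverage f c R‖ ^ 2 ≤ circleAverage (‖f ·‖ ^ 2) c R :=
  map_circleAverage_le_of_convexOn (convexOn_univ_norm.pow (fun _ _ ↦ norm_nonneg _) 2)
    (by fun_prop) isClosed_univ (mapsTo_univ _ _) hf.circleIntegrable'
    (hf.norm.pow 2).circleIntegrable'

theorem ofReal_two_pi_mul_circleAverage {u : ℂ → ℝ} {c : ℂ} {R : ℝ}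
    (hu : ContinuousOn u (sphere c |R|)) (hu₀ : ∀ z ∈ sphere c |R|, 0 ≤ u z) :
    ENNReal.ofReal (2 * π * circleAverage u c R) =
      ∫⁻ θ in Ioo (-π) π, ENNReal.ofReal (u (circleMap c R θ)) := by
  have hint : 2 * π * circleAverage u c R = ∫ θ in -π..π, u (circleMap c R θ) := by
    have hper := ((periodic_circleMap c R).comp u).intervalIntegral_add_eq 0 (-π)
    rw [zero_add, show -π + 2 * π = π by ring] at hper
    rw [circleAverage_def, smul_eq_mul, mul_inv_cancel_left₀ two_pi_pos.ne']
    exact hper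
  have hcont : Continuous fun θ ↦ u (circleMap c R θ) :=
    hu.comp_continuous (continuous_circleMap c R) (circleMap_mem_sphere' c R)
  rw [hint, intervalIntegral.integral_of_le (by linarith [pi_pos]), integral_Ioc_eq_integral_Ioo,
    ofReal_integral_eq_lintegral_ofReal
      (hcont.integrableOn_Icc.mono_set Ioo_subset_Icc_self)
      (ae_of_all _ fun θ ↦ hu₀ _ (circleMap_mem_sphere' c R θ))]

end CircleAverage

section PolarCoordinates

open Real

theorem polarCoord_symm_eq_circleMap (p : ℝ × ℝ) :
    Complex.polarCoord.symm p = circleMap 0 p.1 p.2 := by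
  simp [circleMap, Complex.exp_mul_I]

theorem lintegral_eq_lintegral_circleMap {G : ℂ → ℝ≥0∞} (hG : Measurable G) :
    ∫⁻ z, G z =
      ∫⁻ ρ in Ioi 0, ENNReal.ofReal ρ * ∫⁻ θ in Ioo (-π) π, G (circleMap 0 ρ θ) := by
  have hmeas : Measurable fun p : ℝ × ℝ ↦ G (circleMap 0 p.1 p.2) :=
    hG.comp circleMap.continuous.measurable
  rw [← Complex.lintegral_comp_polarCoord_symm, polarCoord_target, Measure.volume_eq_prod,
    ← Measure.prod_restrict]
  simp only [polarCoord_symm_eq_circleMap, smul_eq_mul]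
  rw [lintegral_prod _ (measurable_fst.ennreal_ofReal.fun_mul hmeas).aemeasurable]
  simp only [lintegral_const_mul' _ _ ofReal_ne_top]

theorem setLIntegral_norm_preimage_eq {G : ℂ → ℝ≥0∞} {s : Set ℝ} (hs : MeasurableSet s)
    (hs₀ : s ⊆ Ioi 0) (hG : ContinuousOn G (norm ⁻¹' s)) :
    ∫⁻ z in norm ⁻¹' s, G z =
      ∫⁻ ρ in s, ENNReal.ofReal ρ * ∫⁻ θ in Ioo (-π) π, G (circleMap 0 ρ θ) := by
  classical
  have hA : MeasurableSet (norm ⁻¹' s : Set ℂ) := measurable_norm hs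
  have hmeas : Measurable ((norm ⁻¹' s).indicator G) := by
    rw [← piecewise_eq_indicator]
    exact hG.measurable_piecewise continuousOn_const hA
  rw [← lintegral_indicator hA, lintegral_eq_lintegral_circleMap hmeas,
    ← inter_eq_self_of_subset_left hs₀, ← setLIntegral_indicator hs,
    inter_eq_self_of_subset_left hs₀]
  refine setLIntegral_congr_fun measurableSet_Ioi fun ρ (hρ : 0 < ρ) ↦ ?_
  by_cases hρs : ρ ∈ s <;> simp [indicator, hρs, abs_of_pos hρ]

theorem ofReal_mul_volume_le_setLIntegral_of_le_circleAverage {u : ℂ → ℝ} {m : ℝ} {s : Set ℝ}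
    (hs : MeasurableSet s) (hs₀ : s ⊆ Ioi 0) (hu : ContinuousOn u (norm ⁻¹' s))
    (hu₀ : ∀ z, ‖z‖ ∈ s → 0 ≤ u z) (hm : ∀ ρ ∈ s, m ≤ circleAverage u 0 ρ) :
    ENNReal.ofReal m * volume (norm ⁻¹' s : Set ℂ) ≤
      ∫⁻ z in norm ⁻¹' s, ENNReal.ofReal (u z) := by
  rw [← setLIntegral_const, setLIntegral_norm_preimage_eq hs hs₀ continuousOn_const,
    setLIntegral_norm_preimage_eq hs hs₀ (G := fun z ↦ ENNReal.ofReal (u z))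
      (continuous_ofReal.comp_continuousOn hu)]
  refine setLIntegral_mono' hs fun ρ hρ ↦ ?_
  have hnorm : ∀ z ∈ Metric.sphere (0 : ℂ) |ρ|, ‖z‖ ∈ s := fun z hz ↦ by
    rwa [mem_sphere_zero_iff_norm.mp hz, abs_of_pos (hs₀ hρ)]
  gcongr ENNReal.ofReal ρ * ?_
  rw [← ofReal_two_pi_mul_circleAverage (hu.mono hnorm) fun z hz ↦ hu₀ z (hnorm z hz),
    setLIntegral_const, Real.volume_Ioo, ← ofReal_mul' (by linarith [pi_pos])]
  exact ofReal_le_ofReal (by nlinarith [hm ρ hρ, pi_pos])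

end PolarCoordinates

section RootAverage

open Metric Polynomial Real

variable {E : Type*} [NormedAddCommGroup E] [NormedSpace ℂ E]

theorem circleAverage_eval_derivative_div_eval_smul [CompleteSpace E] {p : ℂ[X]} {f : ℂ → E} {c : ℂ}
    {R : ℝ} (hf : DiffContOnCl ℂ f (ball c |R|)) (hp : ∀ w ∈ p.roots, w ∈ ball c |R|)
    (hp₀ : p ≠ 0) :
    circleAverage (fun z ↦ ((z - c) * (p.derivative.eval z / p.eval z)) • f z) c R =
      (p.roots.map f).sum := by
  have hsub : ∀ w ∈ p.roots, ∀ z ∈ sphere c |R|, z - w ≠ 0 := fun w hw z hz ↦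
    sub_ne_zero.mpr fun hzw ↦ sphere_disjoint_ball.ne_of_mem hz (hp w hw) hzw
  have hfs : ContinuousOn f (sphere c |R|) := hf.continuousOn_ball.mono sphere_subset_closedBall
  calc
    _ = circleAverage (fun z ↦ (p.roots.map fun w ↦ ((z - c) / (z - w)) • f z).sum) c R := by
      refine circleAverage_congr_sphere fun z hz ↦ ?_
      have hpz : p.eval z ≠ 0 := fun h ↦
        hsub z ((mem_roots hp₀).mpr h) z hz (sub_self z)
      simp only [(IsAlgClosed.splits p).eval_derivative_div_eval_of_ne_zero hpz,
        ← Multiset.sum_map_mul_left, Multiset.sum_smul, Multiset.map_map, Function.comp_def,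
        mul_one_div]
    _ = (p.roots.map fun w ↦ circleAverage (fun z ↦ ((z - c) / (z - w)) • f z) c R).sum :=
      circleAverage_multiset_sum fun w hw ↦ ContinuousOn.circleIntegrable'
        (((by fun_prop : ContinuousOn (fun z ↦ z - c) _).div (by fun_prop) (hsub w hw)).smul hfs)
    _ = (p.roots.map f).sum := by
      rw [Multiset.map_congr rfl fun w hw ↦ hf.circleAverage_smul_div (hp w hw)]

/-- The mean of `f` over the `n`-th roots of `a`, counted with multiplicity: the value at `a` of the
normalized pushforward of `f` under the branched covering `z ↦ z ^ n`. -/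
noncomputable def rootAverage (n : ℕ) (f : ℂ → E) (a : ℂ) : E :=
  (n : ℂ)⁻¹ • ((nthRoots n a).map f).sum

theorem rootAverage_eq_of_forall {n : ℕ} (hn : n ≠ 0) {f : ℂ → E} {a : ℂ} {v : E}
    (hf : ∀ b, b ^ n = a → f b = v) : rootAverage n f a = v := by
  have hcard : (nthRoots n a).card = n := by
    rw [nthRoots, ← (IsAlgClosed.splits _).natDegree_eq_card_roots, natDegree_X_pow_sub_C]
  rw [rootAverage, Multiset.map_congr rfl fun b hb ↦ hf b ((mem_nthRoots hn.pos).mp hb),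
    Multiset.map_const', Multiset.sum_replicate, hcard, ← Nat.cast_smul_eq_nsmul ℂ,
    inv_smul_smul₀ (Nat.cast_ne_zero.mpr hn)]

variable [CompleteSpace E] {f : ℂ → E} {R : ℝ} {n : ℕ} {a : ℂ}

theorem circleAverage_pow_div_pow_sub_smul (hf : DiffContOnCl ℂ f (ball 0 |R|)) (hn : n ≠ 0)
    (ha : ‖a‖ < |R| ^ n) :
    circleAverage (fun z ↦ (z ^ n / (z ^ n - a)) • f z) 0 R = rootAverage n f a := by
  have hroots : ∀ w ∈ nthRoots n a, w ∈ ball (0 : ℂ) |R| := fun w hw ↦ by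
    rw [← (mem_nthRoots hn.pos).mp hw, norm_pow] at ha
    simpa using lt_of_pow_lt_pow_left₀ n (abs_nonneg R) ha
  rw [rootAverage, nthRoots, ← circleAverage_eval_derivative_div_eval_smul hf hroots
    (X_pow_sub_C_ne_zero hn.pos a), ← circleAverage_fun_smul]
  congr! 2 with z
  rw [smul_smul]
  congr 1
  have hpow : z ^ n = z * z ^ (n - 1) := (mul_pow_sub_one hn z).symm
  simp only [sub_zero, derivative_sub, derivative_X_pow, derivative_C, eval_sub, eval_mul, eval_pow,
    eval_X, eval_C, eval_natCast, map_natCast, hpow]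
  field_simp

theorem circleAverage_div_pow_sub_smul (hf : DiffContOnCl ℂ f (ball 0 |R|)) (hn : n ≠ 0)
    (ha : ‖a‖ < |R| ^ n) :
    circleAverage (fun z ↦ (a / (z ^ n - a)) • f z) 0 R = rootAverage n f a - f 0 := by
  have hne : ∀ z ∈ sphere (0 : ℂ) |R|, z ^ n - a ≠ 0 := fun z hz ↦ by
    refine sub_ne_zero.mpr fun h ↦ ha.ne ?_
    rw [← h, norm_pow, mem_sphere_zero_iff_norm.mp hz]
  have hfs : ContinuousOn f (sphere 0 |R|) := hf.continuousOn_ball.mono sphere_subset_closedBall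
  have hint : CircleIntegrable (fun z ↦ (z ^ n / (z ^ n - a)) • f z) 0 R :=
    ContinuousOn.circleIntegrable'
      (((by fun_prop : ContinuousOn (fun z ↦ z ^ n) _).div (by fun_prop) hne).smul hfs)
  rw [← circleAverage_pow_div_pow_sub_smul hf hn ha, ← hf.circleAverage,
    ← circleAverage_fun_sub hint hfs.circleIntegrable']
  refine circleAverage_congr_sphere fun z hz ↦ ?_
  have := hne z hz
  match_scalars
  field_simp
  ring

theorem sq_norm_rootAverage_sub_le (hf : DiffContOnCl ℂ f (ball 0 |R|)) (hn : n ≠ 0)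
    (ha : ‖a‖ < |R| ^ n) :
    ‖rootAverage n f a - f 0‖ ^ 2 ≤
      (‖a‖ / (|R| ^ n - ‖a‖)) ^ 2 * circleAverage (‖f ·‖ ^ 2) 0 R := by
  have hgap : 0 < |R| ^ n - ‖a‖ := sub_pos.mpr ha
  have hle : ∀ z ∈ sphere (0 : ℂ) |R|, |R| ^ n - ‖a‖ ≤ ‖z ^ n - a‖ := fun z hz ↦ by
    simpa [mem_sphere_zero_iff_norm.mp hz] using norm_sub_norm_le (z ^ n) a
  have hfs : ContinuousOn f (sphere 0 |R|) := hf.continuousOn_ball.mono sphere_subset_closedBall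
  have hkf : ContinuousOn (fun z ↦ (a / (z ^ n - a)) • f z) (sphere 0 |R|) :=
    (continuousOn_const.div (by fun_prop) fun z hz ↦
      norm_pos_iff.mp (hgap.trans_le (hle z hz))).smul hfs
  rw [← circleAverage_div_pow_sub_smul hf hn ha, ← smul_eq_mul, ← circleAverage_fun_smul]
  refine (sq_norm_circleAverage_le hkf).trans <| circleAverage_mono
    (hkf.norm.pow 2).circleIntegrable' (hfs.norm.pow 2).circleIntegrable'.const_smul
    fun z hz ↦ ?_
  rw [norm_smul, norm_div, mul_pow, smul_eq_mul]
  gcongr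
  exact hle z hz

end RootAverage

section Annulus

open Metric Real Topology

theorem exists_le_on_annulus {F : Type*} [NormedAddCommGroup F] [ProperSpace F] {w : F → ℝ}
    (hw : ∀ᶠ z in 𝓝[≠] 0, ContinuousAt w z ∧ 0 < w z) {r : ℝ} (hr : 0 < r) :
    ∃ ρ₁ ρ₂ c : ℝ, 0 < ρ₁ ∧ ρ₁ < ρ₂ ∧ ρ₂ < r ∧ 0 < c ∧ ∀ z, ‖z‖ ∈ Icc ρ₁ ρ₂ → c ≤ w z := by
  obtain ⟨ε, hε, hwε⟩ := Metric.eventually_nhds_iff.mp (eventually_nhdsWithin_iff.mp hw)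
  obtain ⟨ρ₂, hρ₂, hρ₂lt⟩ := exists_between (lt_min hε hr)
  obtain ⟨ρ₁, hρ₁, hρ₁₂⟩ := exists_between hρ₂
  have hgood : ∀ z ∈ norm ⁻¹' Icc ρ₁ ρ₂, ContinuousAt w z ∧ 0 < w z := fun z hz ↦
    hwε (by simpa using hz.2.trans_lt (lt_min_iff.mp hρ₂lt).1)
      (norm_pos_iff.mp (hρ₁.trans_le hz.1))
  have hcompact : IsCompact (norm ⁻¹' Icc ρ₁ ρ₂ : Set F) :=
    (isCompact_closedBall 0 ρ₂).of_isClosed_subset (isClosed_Icc.preimage continuous_norm)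
      fun z hz ↦ by simpa using hz.2
  obtain ⟨c, hc, hcw⟩ := hcompact.exists_forall_le'
    (fun z hz ↦ (hgood z hz).1.continuousWithinAt) fun z hz ↦ (hgood z hz).2
  exact ⟨ρ₁, ρ₂, c, hρ₁, hρ₁₂, (lt_min_iff.mp hρ₂lt).2, hc, hcw⟩

theorem volume_annulus_pos {ρ₁ ρ₂ : ℝ} (h₀ : 0 ≤ ρ₁) (h : ρ₁ < ρ₂) :
    0 < volume (norm ⁻¹' Ioo ρ₁ ρ₂ : Set ℂ) := by
  obtain ⟨ρ, hρ⟩ := nonempty_Ioo.mpr h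
  exact (isOpen_Ioo.preimage continuous_norm).measure_pos volume
    ⟨ρ, by simpa [abs_of_pos (h₀.trans_lt hρ.1)] using hρ⟩

theorem ofReal_mul_setLIntegral_le {α : Type*} [MeasurableSpace α] {μ : Measure α} {u w : α → ℝ}
    {s t : Set α} {c : ℝ} (hst : s ⊆ t) (hs : MeasurableSet s) (hu : ∀ x ∈ s, 0 ≤ u x)
    (hw : ∀ x ∈ s, c ≤ w x) :
    ENNReal.ofReal c * ∫⁻ x in s, ENNReal.ofReal (u x) ∂μ ≤
      ∫⁻ x in t, ENNReal.ofReal (u x * w x) ∂μ := by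
  rw [← lintegral_const_mul' _ _ ofReal_ne_top]
  refine (setLIntegral_mono' hs fun x hx ↦ ?_).trans (lintegral_mono_set hst)
  rw [ofReal_mul (hu x hx), mul_comm]
  gcongr
  exact hw x hx

variable {E : Type*} [NormedAddCommGroup E] [NormedSpace ℂ E] [CompleteSpace E]

theorem ofReal_sq_norm_rootAverage_sub_mul_volume_le {f : ℂ → E} {n : ℕ} {a : ℂ} {r ρ₁ ρ₂ : ℝ}
    (hf : DifferentiableOn ℂ f (ball 0 r)) (hn : n ≠ 0) (ha₀ : a ≠ 0) (hρ₁ : 0 < ρ₁)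
    (ha : ‖a‖ < ρ₁ ^ n) (hρ₂ : ρ₂ ≤ r) :
    ENNReal.ofReal (((ρ₁ ^ n - ‖a‖) / ‖a‖ * ‖rootAverage n f a - f 0‖) ^ 2) *
        volume (norm ⁻¹' Ioo ρ₁ ρ₂ : Set ℂ) ≤
      ∫⁻ z in norm ⁻¹' Ioo ρ₁ ρ₂, ENNReal.ofReal (‖f z‖ ^ 2) := by
  have hball : norm ⁻¹' Ioo ρ₁ ρ₂ ⊆ ball (0 : ℂ) r := fun z hz ↦ by
    simpa using hz.2.trans_le hρ₂
  refine ofReal_mul_volume_le_setLIntegral_of_le_circleAverage measurableSet_Ioo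
    (fun ρ hρ ↦ hρ₁.trans hρ.1) ((hf.continuousOn.mono hball).norm.pow 2)
    (fun z _ ↦ by positivity) fun ρ hρ ↦ ?_
  have hρ₀ : |ρ| = ρ := abs_of_pos (hρ₁.trans hρ.1)
  have hpow : ρ₁ ^ n ≤ ρ ^ n := pow_le_pow_left₀ hρ₁.le hρ.1.le n
  have hdiff : DiffContOnCl ℂ f (ball 0 |ρ|) :=
    (hf.mono (closedBall_subset_ball (hρ₀.trans_lt (hρ.2.trans_le hρ₂)))).diffContOnCl_ball
      subset_rfl
  have hgap : 0 < ρ₁ ^ n - ‖a‖ := sub_pos.mpr ha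
  have hcircle := sq_norm_rootAverage_sub_le hdiff hn (by rw [hρ₀]; linarith)
  have havg : 0 ≤ circleAverage (‖f ·‖ ^ 2) 0 ρ :=
    circleAverage_nonneg_of_nonneg fun z _ ↦ by positivity
  rw [hρ₀] at hcircle
  have : ‖a‖ ≠ 0 := norm_ne_zero_iff.mpr ha₀
  calc
    ((ρ₁ ^ n - ‖a‖) / ‖a‖ * ‖rootAverage n f a - f 0‖) ^ 2
        ≤ ((ρ₁ ^ n - ‖a‖) / ‖a‖) ^ 2 *
          ((‖a‖ / (ρ₁ ^ n - ‖a‖)) ^ 2 * circleAverage (‖f ·‖ ^ 2) 0 ρ) := by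
      rw [mul_pow]
      gcongr
      have : 0 < ρ ^ n - ‖a‖ := hgap.trans_le (by linarith)
      refine hcircle.trans ?_
      gcongr
    _ = circleAverage (‖f ·‖ ^ 2) 0 ρ := by field_simp

theorem exists_ofReal_mul_le_lintegral_norm_sq_mul {w : ℂ → ℝ}
    (hw : ∀ᶠ z in 𝓝[≠] 0, ContinuousAt w z ∧ 0 < w z) {r : ℝ} (hr : 0 < r) {n : ℕ} (hn : n ≠ 0) :
    ∃ C > 0, ∃ δ ∈ Ioo 0 r, ∀ a : ℂ, a ≠ 0 → ‖a‖ < δ →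
      ∀ f : ℂ → E, DifferentiableOn ℂ f (ball 0 r) →
        ENNReal.ofReal (C * (‖rootAverage n f a - f 0‖ / ‖a‖) ^ 2) ≤
          ∫⁻ z in ball 0 r, ENNReal.ofReal (‖f z‖ ^ 2 * w z) := by
  obtain ⟨ρ₁, ρ₂, c, hρ₁, hρ₁₂, hρ₂, hc, hcw⟩ := exists_le_on_annulus hw hr
  set A : Set ℂ := norm ⁻¹' Ioo ρ₁ ρ₂
  have hAball : A ⊆ ball 0 r := fun z hz ↦ by simpa using hz.2.trans hρ₂
  have hA : MeasurableSet A := measurable_norm measurableSet_Ioo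
  have hAtop : volume A ≠ ⊤ := ((measure_mono hAball).trans_lt measure_ball_lt_top).ne
  have hApos : 0 < (volume A).toReal := toReal_pos (volume_annulus_pos hρ₁.le hρ₁₂).ne' hAtop
  refine ⟨c * (ρ₁ ^ n / 2) ^ 2 * (volume A).toReal, by positivity, min (ρ₁ ^ n / 2) (r / 2),
    ⟨by positivity, (min_le_right _ _).trans_lt (half_lt_self hr)⟩, fun a ha₀ haδ f hf ↦ ?_⟩
  have ha : ‖a‖ < ρ₁ ^ n / 2 := haδ.trans_le (min_le_left _ _)
  calc
    _ = ENNReal.ofReal c * (ENNReal.ofReal ((ρ₁ ^ n / 2 / ‖a‖ * ‖rootAverage n f a - f 0‖) ^ 2) *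
          volume A) := by
      conv_rhs => rw [← ofReal_toReal hAtop]
      rw [← ofReal_mul (by positivity), ← ofReal_mul hc.le]
      congr 1
      ring
    _ ≤ ENNReal.ofReal c * (ENNReal.ofReal
          (((ρ₁ ^ n - ‖a‖) / ‖a‖ * ‖rootAverage n f a - f 0‖) ^ 2) * volume A) := by
      gcongr
      linarith
    _ ≤ ENNReal.ofReal c * ∫⁻ z in A, ENNReal.ofReal (‖f z‖ ^ 2) := by
      gcongr
      exact ofReal_sq_norm_rootAverage_sub_mul_volume_le hf hn ha₀ hρ₁
        (by linarith [norm_nonneg a]) hρ₂.le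
    _ ≤ ∫⁻ z in ball 0 r, ENNReal.ofReal (‖f z‖ ^ 2 * w z) :=
      ofReal_mul_setLIntegral_le hAball hA (fun z _ ↦ by positivity) fun z hz ↦
        hcw z (Ioo_subset_Icc_self hz)

end Annulus

section Weight

open Metric Topology

variable {E : Type*} [NormedAddCommGroup E] [NormedSpace ℂ E] [CompleteSpace E] {h : ℂ → E}

theorem eventually_nhdsNE_ne_zero_of_differentiableOn {U : Set ℂ} {x : ℂ} (hU : IsOpen U)
    (hUc : IsPreconnected U) (hh : DifferentiableOn ℂ h U) (hne : ∃ z ∈ U, h z ≠ 0) (hx : x ∈ U) :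
    ∀ᶠ z in 𝓝[≠] x, h z ≠ 0 := by
  have hana : AnalyticOnNhd ℂ h U := hh.analyticOnNhd hU
  obtain ⟨z, hz, hhz⟩ := hne
  exact (hana x hx).eventually_eq_zero_or_eventually_ne_zero.resolve_left fun h₀ ↦
    hhz (hana.eqOn_zero_of_preconnected_of_eventuallyEq_zero hUc hx h₀ hz)

theorem eventually_continuousAt_and_pos_norm_sq_mul {r : ℝ} (hr : 0 < r)
    (hh : DifferentiableOn ℂ h (ball 0 r)) (hne : ∃ z ∈ ball 0 r, h z ≠ 0) (k : ℕ) :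
    ∀ᶠ z in 𝓝[≠] 0, ContinuousAt (fun t ↦ ‖h t‖ ^ 2 * ‖t‖ ^ k) z ∧ 0 < ‖h z‖ ^ 2 * ‖z‖ ^ k := by
  filter_upwards [eventually_nhdsNE_ne_zero_of_differentiableOn isOpen_ball
    (convex_ball 0 r).isPreconnected hh hne (mem_ball_self hr), self_mem_nhdsWithin,
    mem_nhdsWithin_of_mem_nhds (ball_mem_nhds 0 hr)] with z hhz hz hzr
  have hhc : ContinuousAt h z := hh.continuousOn.continuousAt (isOpen_ball.mem_nhds hzr)
  exact ⟨by fun_prop, mul_pos (pow_pos (norm_pos_iff.mpr hhz) 2) (pow_pos (norm_pos_iff.mpr hz) k)⟩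

end Weight

/-- Normalized-coordinate estimate on a singular curve: for `h` holomorphic, not
identically zero on `Δ_r`, and `i₁ ≥ 1`, there are `C₂ > 0`, `δ ∈ (0, r)` such that
every holomorphic `f` on `Δ_r` with `f 0 = 0` and `f b = 1` for all `i₁`-th roots
`b` of `a` (where `0 < |a| < δ`, `|a| < r^{i₁}`) satisfies
`i₁² ∫_{Δ_r} |f|²|h|²|t|^{2(i₁−1)} > C₂ |a|⁻²`. -/
theorem stmt_16 (r : ℝ) (hr : 0 < r) (i₁ : ℕ) (hi₁ : 1 ≤ i₁) (h : ℂ → ℂ)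
    (hhol : DifferentiableOn ℂ h (Metric.ball 0 r))
    (hne : ∃ z ∈ Metric.ball (0 : ℂ) r, h z ≠ 0) :
    ∃ C₂ > (0 : ℝ), ∃ δ ∈ Set.Ioo (0 : ℝ) r,
      ∀ a : ℂ, 0 < ‖a‖ → ‖a‖ < δ → ‖a‖ < r ^ i₁ →
        ∀ f : ℂ → ℂ, DifferentiableOn ℂ f (Metric.ball 0 r) → f 0 = 0 →
          (∀ b : ℂ, b ^ i₁ = a → f b = 1) →
          ENNReal.ofReal (C₂ * (‖a‖ ^ 2)⁻¹) <
            ((i₁ : ℝ≥0∞) ^ 2) * ∫⁻ t in Metric.ball (0 : ℂ) r,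
              ENNReal.ofReal (‖f t‖ ^ 2 * ‖h t‖ ^ 2 * ‖t‖ ^ (2 * (i₁ - 1))) := by
  obtain ⟨C, hC, δ, hδ, hbound⟩ := exists_ofReal_mul_le_lintegral_norm_sq_mul (E := ℂ)
    (eventually_continuousAt_and_pos_norm_sq_mul hr hhol hne (2 * (i₁ - 1))) hr
    (Nat.one_le_iff_ne_zero.mp hi₁)
  refine ⟨C / 2, by positivity, δ, hδ, fun a ha haδ _ f hf hf₀ hfa ↦ ?_⟩
  have hmean : rootAverage i₁ f a - f 0 = 1 := by
    rw [rootAverage_eq_of_forall (Nat.one_le_iff_ne_zero.mp hi₁) hfa, hf₀, sub_zero]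
  calc
    ENNReal.ofReal (C / 2 * (‖a‖ ^ 2)⁻¹)
        < ENNReal.ofReal (C * (‖rootAverage i₁ f a - f 0‖ / ‖a‖) ^ 2) := by
      rw [hmean, norm_one, one_div, inv_pow, ofReal_lt_ofReal_iff (by positivity)]
      gcongr
      exact half_lt_self hC
    _ ≤ ∫⁻ t in Metric.ball (0 : ℂ) r,
          ENNReal.ofReal (‖f t‖ ^ 2 * ‖h t‖ ^ 2 * ‖t‖ ^ (2 * (i₁ - 1))) := by
      simpa only [mul_assoc] using hbound a (norm_pos_iff.mp ha) haδ f hf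
    _ ≤ _ := le_mul_of_one_le_left' (one_le_pow₀ (Nat.one_le_cast.mpr hi₁))
end
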